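/- arXiv:1401.6252 — 2 statements merged into one kernel-verified Lean document; each statement's English description precedes it below -/
import Mathlib

section
/- Let k be a positive integer and let D be a binary singly even self-dual code of length 24k+8 with minimum Hamming weight 4k+4. Then the shadow of D contains a vector of Hamming weight at most 4k. -/
open Finset

namespace Z4Note

variable {ι : Type*} [Fintype ι]

/-- Hamming weight of a binary vector. -/
def hWt (x : ι → ZMod 2) : ℕ := (Finset.univ.filter fun i => x i ≠ 0).card

/-- Lee value of an element of `ZMod 4`:  0 ↦ 0, 1 ↦ 1, 2 ↦ 2, 3 ↦ 1. -/
def leeVal (a : ZMod 4) : ℕ := min a.val (4 - a.val)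

/-- Lee weight `n₁(x) + 2 n₂(x) + n₃(x)`. -/
def leeWt (x : ι → ZMod 4) : ℕ := ∑ i, leeVal (x i)

/-- Euclidean weight `n₁(x) + 4 n₂(x) + n₃(x)`. -/
def eucWt (x : ι → ZMod 4) : ℕ := ∑ i, (leeVal (x i)) ^ 2

/-- Number of coordinates of `x` equal to `a`. -/
def nCount (a : ZMod 4) (x : ι → ZMod 4) : ℕ := (Finset.univ.filter fun i => x i = a).card

/-- Dual of a `ZMod 4`-code (as a set), w.r.t. the standard inner product. -/
def dualZ4 (C : Set (ι → ZMod 4)) : Set (ι → ZMod 4) :=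
  {x | ∀ y ∈ C, ∑ i, x i * y i = 0}

/-- Dual of a binary code (as a set), w.r.t. the standard inner product. -/
def dual2 (C : Set (ι → ZMod 2)) : Set (ι → ZMod 2) :=
  {x | ∀ y ∈ C, ∑ i, x i * y i = 0}

/-- A `ZMod 4`-code is self-dual if it equals its dual. -/
def SelfDualZ4 (C : Submodule (ZMod 4) (ι → ZMod 4)) : Prop :=
  (C : Set (ι → ZMod 4)) = dualZ4 (C : Set (ι → ZMod 4))

/-- A binary code is self-dual if it equals its dual. -/
def SelfDual2 (D : Submodule (ZMod 2) (ι → ZMod 2)) : Prop :=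
  (D : Set (ι → ZMod 2)) = dual2 (D : Set (ι → ZMod 2))

/-- Coordinatewise reduction modulo 2. -/
def res2 (x : ι → ZMod 4) : ι → ZMod 2 :=
  fun i => ZMod.castHom (by norm_num : (2:ℕ) ∣ 4) (ZMod 2) (x i)

/-- The residue code `C⁽¹⁾ = {c mod 2 : c ∈ C}`. -/
def residue (C : Set (ι → ZMod 4)) : Set (ι → ZMod 2) := res2 '' C

/-- Minimum Lee weight among nonzero codewords. -/
noncomputable def minLee (C : Set (ι → ZMod 4)) : ℕ := sInf {d | ∃ x ∈ C, x ≠ 0 ∧ leeWt x = d}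

/-- Minimum Euclidean weight among nonzero codewords. -/
noncomputable def minEuc (C : Set (ι → ZMod 4)) : ℕ := sInf {d | ∃ x ∈ C, x ≠ 0 ∧ eucWt x = d}

/-- Minimum Hamming weight among nonzero codewords of a binary code. -/
noncomputable def minHam (C : Set (ι → ZMod 2)) : ℕ := sInf {d | ∃ x ∈ C, x ≠ 0 ∧ hWt x = d}

/-- A binary code is doubly even if all weights are divisible by 4. -/
def DoublyEven (C : Set (ι → ZMod 2)) : Prop := ∀ x ∈ C, 4 ∣ hWt x

/-- A binary code is singly even if some codeword has weight not divisible by 4. -/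
def SinglyEven (C : Set (ι → ZMod 2)) : Prop := ∃ x ∈ C, ¬ 4 ∣ hWt x

/-- A self-dual `ZMod 4`-code is Type II if all Euclidean weights are divisible by 8. -/
def TypeII (C : Set (ι → ZMod 4)) : Prop := ∀ x ∈ C, 8 ∣ eucWt x

/-- The doubly even subcode of a binary code. -/
def evenSubcode (D : Set (ι → ZMod 2)) : Set (ι → ZMod 2) := {x ∈ D | 4 ∣ hWt x}

/-- The shadow `S = D₀^⊥ \ D` of a binary code. -/
def shadow (D : Set (ι → ZMod 2)) : Set (ι → ZMod 2) := dual2 (evenSubcode D) \ D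

/-- A binary singly even self-dual code is s-extremal if equality holds in the
Bachoc–Gaborit bound relating the minimum weight of the code and of its shadow. -/
def SExtremal (D : Submodule (ZMod 2) (ι → ZMod 2)) : Prop :=
  SelfDual2 D ∧ SinglyEven (D : Set (ι → ZMod 2)) ∧
  ((¬ (Fintype.card ι % 24 = 22 ∧
        minHam (D : Set (ι → ZMod 2)) = 4 * (Fintype.card ι / 24) + 6)) →
      minHam (shadow (D : Set (ι → ZMod 2))) + 2 * minHam (D : Set (ι → ZMod 2)) =
        Fintype.card ι / 2 + 4) ∧
  ((Fintype.card ι % 24 = 22 ∧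
        minHam (D : Set (ι → ZMod 2)) = 4 * (Fintype.card ι / 24) + 6) →
      minHam (shadow (D : Set (ι → ZMod 2))) + 2 * minHam (D : Set (ι → ZMod 2)) =
        Fintype.card ι / 2 + 8)

/-- Equivalence of `ZMod 4`-codes: coordinate permutation together with sign changes. -/
def Z4Equiv (C C' : Set (ι → ZMod 4)) : Prop :=
  ∃ σ : Equiv.Perm ι, ∃ ε : ι → ZMod 4, (∀ i, ε i = 1 ∨ ε i = -1) ∧
    C' = (fun x => fun i => ε i * x (σ i)) '' C

/-- Covering radius of a binary code. -/
noncomputable def covRad (C : Set (ι → ZMod 2)) : ℕ :=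
  sInf {R | ∀ v : ι → ZMod 2, ∃ c ∈ C, hWt (v - c) ≤ R}

/-- Entry `(i,j)` of the circulant matrix with first row `r`. -/
def circEntry {m : ℕ} (r : Fin m → ZMod 4) (i j : Fin m) : ZMod 4 := r (j - i)

/-- Entry `(i,j)` of the negacirculant matrix with first row `r`. -/
def negaEntry {m : ℕ} (r : Fin m → ZMod 4) (i j : Fin m) : ZMod 4 :=
  if i.val ≤ j.val then r (j - i) else - r (j - i)

/-- The bordered part `B` of the generator matrix of a bordered double circulant code. -/
def bdcB {m : ℕ} (α β γ : ZMod 4) (r : Fin m → ZMod 4) :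
    Fin (m+1) → Fin (m+1) → ZMod 4 :=
  Fin.cases (Fin.cases α fun _ => β) (fun i' => Fin.cases γ fun j' => circEntry r i' j')

/-- Row `i` of the generator matrix `(I | B)` of a bordered double circulant code. -/
def bdcRow {m : ℕ} (α β γ : ZMod 4) (r : Fin m → ZMod 4) (i : Fin (m+1)) :
    (Fin (m+1) ⊕ Fin (m+1)) → ZMod 4 :=
  Sum.elim (fun j => if j = i then 1 else 0) (bdcB α β γ r i)

/-- The bordered double circulant code of length `2(m+1)`. -/
def bdcCode {m : ℕ} (α β γ : ZMod 4) (r : Fin m → ZMod 4) :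
    Submodule (ZMod 4) ((Fin (m+1) ⊕ Fin (m+1)) → ZMod 4) :=
  Submodule.span (ZMod 4) (Set.range (bdcRow α β γ r))

/-- The block matrix `[[A, B], [-Bᵀ, Aᵀ]]` built from negacirculant `A`, `B`. -/
def fourNegaM {n : ℕ} (a b : Fin n → ZMod 4) :
    (Fin n ⊕ Fin n) → (Fin n ⊕ Fin n) → ZMod 4
  | Sum.inl i, Sum.inl j => negaEntry a i j
  | Sum.inl i, Sum.inr j => negaEntry b i j
  | Sum.inr i, Sum.inl j => - negaEntry b j i
  | Sum.inr i, Sum.inr j => negaEntry a j i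

/-- Row `i` of the generator matrix `(I | M)` of a four-negacirculant code. -/
def fourNegaRow {n : ℕ} (a b : Fin n → ZMod 4) (i : Fin n ⊕ Fin n) :
    ((Fin n ⊕ Fin n) ⊕ (Fin n ⊕ Fin n)) → ZMod 4 :=
  Sum.elim (fun j => if j = i then 1 else 0) (fourNegaM a b i)

/-- The four-negacirculant code of length `4n`. -/
def fourNegaCode {n : ℕ} (a b : Fin n → ZMod 4) :
    Submodule (ZMod 4) (((Fin n ⊕ Fin n) ⊕ (Fin n ⊕ Fin n)) → ZMod 4) :=
  Submodule.span (ZMod 4) (Set.range (fourNegaRow a b))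

end Z4Note

/-!
The weight enumerator `W` of a self-dual code of length `n = 2 * m` is invariant under the
MacWilliams transform, so in the variable `X = y²` Gleason's theorem expands it as
`∑ j, F_j * (X * (1 - X) ^ 2) ^ j * (1 + X) ^ (m - 4 * j)` for a polynomial `F`. The
weight enumerator of the shadow is a transform of `W` in which the `j`-th summand has order
`m - 4 * j`; hence the leading coefficient of `F` yields a vector of weight `m - 4 * deg F` in
the shadow. If `deg F` were small compared with the minimum weight `d`, then `F` would agree with
the expansion of `(1 + X) ^ (-m)` in powers of `X * (1 - X) ^ 2 / (1 + X) ^ 4` up to an order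
beyond `deg F`. Lagrange–Bürmann inversion shows that the relevant coefficient of this expansion
is nonzero except when `m = 6 * J + 5` with `J` odd, the exceptional case of the bound
`wt v + 2 * d ≤ n / 2 + 4`.
-/

namespace Z4Note

section HomogAeval

open Polynomial

variable {R A B : Type*} [CommSemiring R] [CommSemiring A] [Algebra R A] [CommSemiring B]
  [Algebra R B]

/-- The linear map `Q ↦ u ^ m * Q (v / u)` on polynomials of degree at most `m`, encoded without
division as the value at `(v, u)` of the homogenization of `Q` of degree `m`. Monomials of degree
larger than `m` are sent to `0`. -/
noncomputable def homogAeval (m : ℕ) (u v : A) : R[X] →ₗ[R] A :=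
  (MvPolynomial.aeval ![v, u]).toLinearMap ∘ₗ homogenizeLM m

variable {m k : ℕ} (u v : A) {P Q : R[X]}

lemma homogAeval_apply : homogAeval m u v Q = MvPolynomial.aeval ![v, u] (Q.homogenize m) := rfl

lemma homogAeval_X_pow {j : ℕ} (hj : j ≤ m) :
    homogAeval m u v (X ^ j : R[X]) = v ^ j * u ^ (m - j) := by
  simp [homogAeval_apply, homogenize_X_pow hj]

lemma homogAeval_mul (hP : P.natDegree ≤ m) (hQ : Q.natDegree ≤ k) :
    homogAeval (m + k) u v (P * Q) = homogAeval m u v P * homogAeval k u v Q := by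
  simp [homogAeval_apply, homogenize_mul _ _ hP hQ]

lemma homogAeval_one : homogAeval m u v (1 : R[X]) = u ^ m := by simp [homogAeval_apply]

lemma homogAeval_pow (hP : P.natDegree ≤ k) (j : ℕ) :
    homogAeval (k * j) u v (P ^ j) = homogAeval k u v P ^ j := by
  induction j with
  | zero => simp [homogAeval_one]
  | succ j ih =>
    have hPj : (P ^ j).natDegree ≤ k * j := (natDegree_pow_le_of_le j hP).trans_eq (mul_comm _ _)
    rw [pow_succ, pow_succ, mul_add_one, homogAeval_mul _ _ hPj hP, ih]

lemma map_homogAeval (φ : A →ₐ[R] B) :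
    φ (homogAeval m u v Q) = homogAeval m (φ u) (φ v) Q := by
  rw [homogAeval_apply, homogAeval_apply, ← AlgHom.comp_apply, MvPolynomial.comp_aeval]
  congr 2
  ext i
  fin_cases i <;> rfl

lemma homogAeval_eq_sum (hQ : Q.natDegree ≤ m) :
    homogAeval m u v Q = ∑ i ∈ range (m + 1), Q.coeff i • (v ^ i * u ^ (m - i)) := by
  conv_lhs => rw [Q.as_sum_range_C_mul_X_pow' (Nat.lt_succ_of_le hQ)]
  simp only [map_sum, ← smul_eq_C_mul, map_smul]
  exact sum_congr rfl fun i hi ↦ by rw [homogAeval_X_pow _ _ (mem_range_succ_iff.1 hi)]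

lemma homogAeval_zero_right (hQ : Q.natDegree ≤ m) :
    homogAeval m u 0 Q = Q.coeff 0 • u ^ m := by
  rw [homogAeval_eq_sum _ _ hQ, sum_eq_single 0] <;> simp +contextual

lemma homogAeval_zero_left (hQ : Q.natDegree ≤ m) :
    homogAeval m 0 v Q = Q.coeff m • v ^ m := by
  rw [homogAeval_eq_sum _ _ hQ, sum_eq_single m]
  · simp
  · intro i hi him
    rw [zero_pow (by grind), mul_zero, smul_zero]
  · simp

lemma dvd_homogAeval (hQ : Q.natDegree ≤ m) (h0 : Q.coeff 0 = 0) :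
    v ∣ homogAeval m u v Q := by
  rw [homogAeval_eq_sum _ _ hQ]
  refine dvd_sum fun i _ ↦ ?_
  obtain rfl | hi := eq_or_ne i 0
  · simp [h0]
  · exact dvd_smul_of_dvd _ ((dvd_pow_self v hi).mul_right _)

end HomogAeval

section Gleason

open Polynomial

variable {R A : Type*} [CommRing R] [CommRing A] [Algebra R A]
  {m : ℕ} {Q : R[X]}

lemma X_sub_C_sq_dvd_iff {t : R} :
    (X - C t) ^ 2 ∣ Q ↔ Q.IsRoot t ∧ (derivative Q).IsRoot t := by
  obtain rfl | hQ := eq_or_ne Q 0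
  · simp
  · rw [← le_rootMultiplicity_iff hQ, ← one_lt_rootMultiplicity_iff_isRoot hQ]
    rfl

lemma one_sub_X_sq_dvd_of_dvd_expand_two {Q : ℚ[X]} (hQ : (1 - X) ^ 2 ∣ expand ℚ 2 Q) :
    (1 - X) ^ 2 ∣ Q := by
  have hX : (1 - X : ℚ[X]) ^ 2 = (X - C 1) ^ 2 := by rw [C_1]; ring
  rw [hX, X_sub_C_sq_dvd_iff] at hQ ⊢
  simpa [derivative_expand, expand_eval] using hQ

/-- Invariance under the MacWilliams transformation of a formal half weight enumerator, for
codes of length `2 * m`. -/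
def MacWilliamsInvariant (m : ℕ) (Q : ℚ[X]) : Prop :=
  homogAeval m ((1 + X) ^ 2) ((1 - X) ^ 2) Q = 2 ^ m * expand ℚ 2 Q

/-- The elements of Gleason's basis of the MacWilliams invariant polynomials. In terms of weight
enumerators this is `(x² y² (x² - y²)²) ^ j * (x² + y²) ^ (m - 4 * j)`. -/
noncomputable def gleasonPoly (m j : ℕ) : ℚ[X] := (X * (1 - X) ^ 2) ^ j * (1 + X) ^ (m - 4 * j)

lemma gleasonPoly_zero : gleasonPoly m 0 = (1 + X) ^ m := by simp [gleasonPoly]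

lemma gleasonPoly_succ (j : ℕ) :
    gleasonPoly (m + 4) (j + 1) = X * (1 - X) ^ 2 * gleasonPoly m j := by
  rw [gleasonPoly, gleasonPoly, show m + 4 - 4 * (j + 1) = m - 4 * j by lia]
  ring

lemma homogAeval_X_mul_one_sub_X_sq (u v : A) :
    homogAeval 4 u v (X * (1 - X) ^ 2 : R[X]) = u * v * (u - v) ^ 2 := by
  have hexp : X * (1 - X) ^ 2 = X ^ 1 - (2 : R) • X ^ 2 + (X ^ 3 : R[X]) := by
    rw [smul_eq_C_mul, map_ofNat]
    ring
  rw [hexp, map_add, map_sub, map_smul, homogAeval_X_pow, homogAeval_X_pow, homogAeval_X_pow]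
  · simp only [ofNat_smul_eq_nsmul]
    ring
  all_goals norm_num

lemma natDegree_one_add_X_le : (1 + X : R[X]).natDegree ≤ 1 := by compute_degree

lemma natDegree_X_mul_one_sub_X_sq_le : (X * (1 - X) ^ 2 : R[X]).natDegree ≤ 4 :=
  (by compute_degree : natDegree _ ≤ 3).trans (by norm_num)

lemma homogAeval_one_add_X_pow (u v : A) :
    homogAeval m u v ((1 + X) ^ m : R[X]) = (u + v) ^ m := by
  have h1 : homogAeval 1 u v (1 + X : R[X]) = u + v := by
    have := homogAeval_X_pow (R := R) u v (le_refl 1)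
    rw [pow_one] at this
    rw [map_add, homogAeval_one, this]
    simp
  have h := homogAeval_pow u v (natDegree_one_add_X_le (R := R)) m
  rwa [one_mul, h1] at h

lemma homogAeval_gleasonPoly [Algebra ℚ A] (u v : A) {j : ℕ} (hj : 4 * j ≤ m) :
    homogAeval m u v (gleasonPoly m j) = (u * v * (u - v) ^ 2) ^ j * (u + v) ^ (m - 4 * j) := by
  have hdeg := natDegree_X_mul_one_sub_X_sq_le (R := ℚ)
  have h := homogAeval_mul u v (natDegree_pow_le_of_le j hdeg |>.trans_eq (mul_comm _ _))
    (by compute_degree : ((1 + X : ℚ[X]) ^ (m - 4 * j)).natDegree ≤ m - 4 * j)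
  rw [Nat.add_sub_cancel' hj] at h
  rw [gleasonPoly, h, homogAeval_pow u v hdeg, homogAeval_X_mul_one_sub_X_sq,
    homogAeval_one_add_X_pow]

namespace MacWilliamsInvariant

variable {Q : ℚ[X]}

lemma one_add_X_pow (m : ℕ) : MacWilliamsInvariant m ((1 + X) ^ m) := by
  rw [MacWilliamsInvariant, homogAeval_one_add_X_pow, map_pow, map_add, map_one, expand_X,
    ← mul_pow]
  ring

lemma sub {P : ℚ[X]} (hP : MacWilliamsInvariant m P) (hQ : MacWilliamsInvariant m Q) :
    MacWilliamsInvariant m (P - Q) := by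
  rw [MacWilliamsInvariant, map_sub, map_sub, mul_sub, hP, hQ]

lemma C_mul (hQ : MacWilliamsInvariant m Q) (a : ℚ) : MacWilliamsInvariant m (C a * Q) := by
  rw [MacWilliamsInvariant, ← smul_eq_C_mul, map_smul, map_smul, hQ, mul_smul_comm]

lemma coeff_eq_coeff_zero (hQ : MacWilliamsInvariant m Q) (hdeg : Q.natDegree ≤ m) :
    Q.coeff m = Q.coeff 0 := by
  have eval_eq (x : ℚ) :
      homogAeval m ((1 + x) ^ 2) ((1 - x) ^ 2) Q = 2 ^ m * Q.eval (x ^ 2) := by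
    have h := congr(aeval x $hQ)
    rw [map_homogAeval] at h
    simpa [expand_eval, ← coe_aeval_eq_eval, map_ofNat] using h
  have h1 := eval_eq 1
  have h2 := eval_eq (-1)
  rw [sub_self, zero_pow two_ne_zero, homogAeval_zero_right _ hdeg] at h1
  rw [add_neg_cancel, zero_pow two_ne_zero, homogAeval_zero_left _ hdeg] at h2
  norm_num at h1 h2
  exact mul_right_cancel₀ (by positivity : (4 : ℚ) ^ m ≠ 0) (h2.trans h1.symm)

lemma X_mul_one_sub_X_sq_dvd (hQ : MacWilliamsInvariant m Q) (hdeg : Q.natDegree ≤ m)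
    (h0 : Q.coeff 0 = 0) : X * (1 - X) ^ 2 ∣ Q := by
  have hcop : IsCoprime (X : ℚ[X]) ((1 - X) ^ 2) := by
    refine IsCoprime.pow_right ⟨1, 1, by ring⟩
  refine hcop.mul_dvd (X_dvd_iff.2 h0) (one_sub_X_sq_dvd_of_dvd_expand_two ?_)
  have h : (1 - X) ^ 2 ∣ 2 ^ m * expand ℚ 2 Q := hQ ▸ dvd_homogAeval _ _ hdeg h0
  have hu : IsUnit (2 ^ m : ℚ[X]) := ((IsUnit.mk0 (2 : ℚ) two_ne_zero).map C).pow m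
  exact (hu.dvd_mul_left).1 h

lemma of_X_mul_one_sub_X_sq_mul (hdeg : Q.natDegree ≤ m)
    (h : MacWilliamsInvariant (m + 4) (X * (1 - X) ^ 2 * Q)) : MacWilliamsInvariant m Q := by
  rw [MacWilliamsInvariant, add_comm m, homogAeval_mul _ _ natDegree_X_mul_one_sub_X_sq_le hdeg,
    homogAeval_X_mul_one_sub_X_sq] at h
  have hne : (16 * (X * (1 - X ^ 2)) ^ 2 : ℚ[X]) ≠ 0 := fun h ↦ by
    have := congr(eval 2 $h)
    norm_num at this
  refine mul_left_cancel₀ hne ?_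
  simp only [map_mul, map_pow, map_sub, map_one, expand_X] at h
  linear_combination h

lemma exists_eq_X_mul_one_sub_X_sq_mul (hQ : MacWilliamsInvariant m Q) (hdeg : Q.natDegree ≤ m)
    (h0 : Q.coeff 0 = 0) (hne : Q ≠ 0) :
    ∃ l Q₁, m = l + 4 ∧ Q = X * (1 - X) ^ 2 * Q₁ ∧ Q₁.natDegree ≤ l ∧
      MacWilliamsInvariant l Q₁ := by
  obtain ⟨Q₁, rfl⟩ := hQ.X_mul_one_sub_X_sq_dvd hdeg h0
  have hdeg_mul : (X * (1 - X) ^ 2 * Q₁).natDegree = 3 + Q₁.natDegree := by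
    rw [natDegree_mul (left_ne_zero_of_mul hne) (right_ne_zero_of_mul hne)]
    congr 1
    compute_degree!
  have hlt : 3 + Q₁.natDegree ≠ m := by
    rintro rfl
    have := hQ.coeff_eq_coeff_zero hdeg
    rw [h0, ← hdeg_mul, coeff_natDegree, leadingCoeff_eq_zero] at this
    exact hne this
  obtain ⟨l, rfl⟩ : ∃ l, m = l + 4 := ⟨m - 4, by lia⟩
  have hQ₁ : Q₁.natDegree ≤ l := by lia
  exact ⟨l, Q₁, rfl, rfl, hQ₁, of_X_mul_one_sub_X_sq_mul hQ₁ hQ⟩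

theorem exists_eq_sum_gleasonPoly (hQ : MacWilliamsInvariant m Q) (hdeg : Q.natDegree ≤ m) :
    ∃ F : ℚ[X], 4 * F.natDegree ≤ m ∧
      Q = ∑ j ∈ range (m / 4 + 1), C (F.coeff j) * gleasonPoly m j := by
  induction m using Nat.strong_induction_on generalizing Q with
  | _ m ih =>
    set T := Q - C (Q.coeff 0) * (1 + X) ^ m with hT
    have hTinv : MacWilliamsInvariant m T := hQ.sub ((one_add_X_pow m).C_mul _)
    have hTdeg : T.natDegree ≤ m :=
      (natDegree_sub_le_of_le hdeg (by compute_degree)).trans_eq (max_self m)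
    have hT0 : T.coeff 0 = 0 := by simp [hT, coeff_zero_eq_eval_zero]
    have hQT : Q = T + C (Q.coeff 0) * (1 + X) ^ m := by rw [hT, sub_add_cancel]
    obtain hT | hT := eq_or_ne T 0
    · refine ⟨C (Q.coeff 0), by simp, ?_⟩
      simpa [hT, sum_range_succ', coeff_C_succ, gleasonPoly_zero] using hQT
    · obtain ⟨l, T₁, rfl, hTT₁, hdeg₁, hT₁⟩ :=
        hTinv.exists_eq_X_mul_one_sub_X_sq_mul hTdeg hT0 hT
      obtain ⟨F, hF, hsum⟩ := ih l (by lia) hT₁ hdeg₁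
      refine ⟨X * F + C (Q.coeff 0), ?_, ?_⟩
      · have := natDegree_mul_le (p := X) (q := F)
        rw [natDegree_X] at this
        rw [natDegree_add_C]
        lia
      · rw [Nat.add_div_right l four_pos, sum_range_succ']
        simp only [coeff_add, coeff_X_mul, coeff_C_succ, add_zero, gleasonPoly_succ,
          mul_left_comm (C _), ← mul_sum, ← hsum, ← hTT₁, coeff_X_mul_zero, coeff_C_zero, zero_add,
          gleasonPoly_zero, hQT.symm]

end MacWilliamsInvariant

lemma homogAeval_gleasonPoly_shadow {m j : ℕ} (hj : 4 * j ≤ m) :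
    homogAeval m ((1 + X) ^ 2) (-(1 - X) ^ 2) (gleasonPoly m j) =
      C ((-4) ^ j * 4 ^ (m - 4 * j)) * (1 - X ^ 4) ^ (2 * j) * (X : ℚ[X]) ^ (m - 4 * j) := by
  rw [homogAeval_gleasonPoly _ _ hj]
  calc
    _ = (-4 * (1 - (X : ℚ[X]) ^ 4) ^ 2) ^ j * (4 * X) ^ (m - 4 * j) := by ring_nf
    _ = _ := by
      simp only [mul_pow, ← pow_mul, C_mul, C_pow, C_neg, map_ofNat]
      ring

lemma coeff_homogAeval_gleasonPoly_shadow_of_lt {m j i : ℕ} (hj : 4 * j ≤ m) (hi : i < m - 4 * j) :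
    (homogAeval m ((1 + X) ^ 2) (-(1 - X) ^ 2) (gleasonPoly m j) : ℚ[X]).coeff i = 0 := by
  rw [homogAeval_gleasonPoly_shadow hj, coeff_mul_X_pow', if_neg hi.not_ge]

lemma coeff_homogAeval_gleasonPoly_shadow {m j : ℕ} (hj : 4 * j ≤ m) :
    (homogAeval m ((1 + X) ^ 2) (-(1 - X) ^ 2) (gleasonPoly m j) : ℚ[X]).coeff (m - 4 * j) =
      (-4) ^ j * 4 ^ (m - 4 * j) := by
  rw [homogAeval_gleasonPoly_shadow hj, coeff_mul_X_pow', if_pos le_rfl, Nat.sub_self, coeff_C_mul]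
  simp [coeff_zero_eq_eval_zero]

lemma coeff_homogAeval_sum_gleasonPoly_shadow {m : ℕ} {F : ℚ[X]} (hF : 4 * F.natDegree ≤ m) :
    (homogAeval m ((1 + X) ^ 2) (-(1 - X) ^ 2)
      (∑ j ∈ range (m / 4 + 1), C (F.coeff j) * gleasonPoly m j) : ℚ[X]).coeff
        (m - 4 * F.natDegree) =
      F.leadingCoeff * ((-4) ^ F.natDegree * 4 ^ (m - 4 * F.natDegree)) := by
  simp only [← smul_eq_C_mul, map_sum, map_smul, finsetSum_coeff, coeff_smul, smul_eq_mul]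
  rw [sum_eq_single F.natDegree, coeff_homogAeval_gleasonPoly_shadow hF, leadingCoeff]
  · intro j hj hne
    have hjm : 4 * j ≤ m := by grind
    obtain hlt | hgt := hne.lt_or_gt
    · rw [coeff_homogAeval_gleasonPoly_shadow_of_lt hjm (by lia), mul_zero]
    · rw [coeff_eq_zero_of_natDegree_lt hgt, zero_mul]
  · grind

end Gleason

section Lagrange

open PowerSeries

lemma X_pow_dvd_derivative {R : Type*} [CommSemiring R] {f : R⟦X⟧} {n : ℕ} (hf : X ^ (n + 1) ∣ f) :
    X ^ n ∣ d⁄dX R f := by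
  rw [X_pow_dvd_iff] at hf ⊢
  intro i hi
  rw [coeff_derivative, hf _ (by lia), zero_mul]

variable {K : Type*} [Field K] [CharZero K] {f g h : K⟦X⟧} {j J : ℕ}

lemma coeff_derivative_pow_mul_pow_eq_zero (hgh : g * h = X) (hj : j ≤ J) :
    coeff J (d⁄dX K (g ^ j) * h ^ (J + 1)) = 0 := by
  obtain _ | j := j
  · simp
  obtain ⟨r, rfl⟩ : ∃ r, J = j + (r + 1) := ⟨J - j - 1, by lia⟩
  have hderiv : g * d⁄dX K h + h * d⁄dX K g = 1 := by
    simpa [hgh] using (Derivation.leibniz (d⁄dX K) g h).symm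
  have hfactor : (r + 1) • (d⁄dX K (g ^ (j + 1)) * h ^ (j + (r + 1) + 1)) =
      (j + 1) • (X ^ j * ((r + 1) • h ^ (r + 1) - X * d⁄dX K (h ^ (r + 1)))) := by
    simp only [Derivation.leibniz_pow, Nat.add_sub_cancel, nsmul_eq_mul, smul_eq_mul, ← hgh]
    linear_combination (j + 1 : ℕ) * (r + 1 : ℕ) * g ^ j * h ^ (j + r + 1) * hderiv
  have hbracket : coeff (r + 1) ((r + 1) • h ^ (r + 1) - X * d⁄dX K (h ^ (r + 1))) = 0 := by
    rw [map_sub, map_nsmul, coeff_succ_X_mul, coeff_derivative, nsmul_eq_mul, Nat.cast_succ,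
      mul_comm, sub_self]
  have hcoeff := congr(coeff (j + (r + 1)) $hfactor)
  rw [map_nsmul, map_nsmul, add_comm j, coeff_X_pow_mul, hbracket, smul_zero, add_comm _ j]
    at hcoeff
  exact (smul_eq_zero.1 hcoeff).resolve_left r.succ_ne_zero

lemma coeff_derivative_mul_pow_eq_zero (hgh : g * h = X) {F : Polynomial K} (hF : F.natDegree ≤ J)
    (hf : X ^ (J + 2) ∣ f - Polynomial.aeval g F) : coeff J (d⁄dX K f * h ^ (J + 1)) = 0 := by
  have hsub : coeff J (d⁄dX K (f - Polynomial.aeval g F) * h ^ (J + 1)) = 0 :=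
    X_pow_dvd_iff.1 ((X_pow_dvd_derivative hf).mul_right _) J J.lt_succ_self
  have haeval : coeff J (d⁄dX K (Polynomial.aeval g F) * h ^ (J + 1)) = 0 := by
    rw [Polynomial.aeval_eq_sum_range, map_sum, sum_mul, map_sum]
    refine sum_eq_zero fun j hj ↦ ?_
    rw [Derivation.map_smul, smul_mul_assoc, map_smul,
      coeff_derivative_pow_mul_pow_eq_zero hgh (by grind), smul_zero]
  rwa [map_sub, sub_mul, map_sub, haeval, sub_zero] at hsub

end Lagrange

section GeometricSeries

open PowerSeries

variable {K : Type*} [Field K]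

lemma one_add_X_mul_inv : (1 + X : K⟦X⟧) * (1 + X)⁻¹ = 1 := PowerSeries.mul_inv_cancel _ (by simp)

lemma one_sub_X_mul_inv : (1 - X : K⟦X⟧) * (1 - X)⁻¹ = 1 := PowerSeries.mul_inv_cancel _ (by simp)

lemma one_add_X_inv_mul_one_sub_X_inv :
    (1 + X : K⟦X⟧)⁻¹ * (1 - X)⁻¹ = (1 - X ^ 2)⁻¹ := by
  rw [← PowerSeries.mul_inv_rev]
  congr 1
  ring

lemma coeff_one_sub_X_inv (n : ℕ) : coeff n ((1 - X : K⟦X⟧)⁻¹) = 1 := by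
  rw [← (PowerSeries.eq_inv_iff_mul_eq_one (by simp)).2 (mk_one_mul_one_sub_eq_one K), coeff_mk,
    Pi.one_apply]

lemma one_sub_X_sq_inv_eq_mk :
    (1 - X ^ 2 : K⟦X⟧)⁻¹ = mk fun n ↦ if Even n then 1 else 0 := by
  rw [eq_comm, PowerSeries.eq_inv_iff_mul_eq_one (by simp)]
  ext n
  rw [mul_sub, mul_one, map_sub, coeff_mul_X_pow', coeff_mk, coeff_mk, coeff_one]
  split_ifs <;> grind

lemma coeff_one_sub_X_sq_inv (n : ℕ) :
    coeff n ((1 - X ^ 2 : K⟦X⟧)⁻¹) = if Even n then 1 else 0 := by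
  rw [one_sub_X_sq_inv_eq_mk, coeff_mk]

lemma rescale_neg_one_one_add_X_inv :
    rescale (-1 : K) ((1 + X)⁻¹) = (1 - X)⁻¹ := by
  rw [PowerSeries.eq_inv_iff_mul_eq_one (by simp)]
  have h : rescale (-1 : K) (1 + X) = 1 - X := by simp [rescale_X, sub_eq_add_neg]
  rw [← h, ← map_mul, PowerSeries.inv_mul_cancel _ (by simp), map_one]

lemma rescale_neg_one_one_sub_X_sq_inv :
    rescale (-1 : K) (1 - X ^ 2)⁻¹ = (1 - X ^ 2)⁻¹ := by
  rw [one_sub_X_sq_inv_eq_mk, rescale_mk]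
  ext n
  rw [coeff_mk, coeff_mk]
  split_ifs with hn <;> simp [hn]

end GeometricSeries

section NonnegCoeff

open PowerSeries

/-- The power series all of whose coefficients are nonnegative. -/
def nonnegCoeff (R : Type*) [Semiring R] [PartialOrder R] [IsOrderedRing R] :
    Subsemiring R⟦X⟧ where
  carrier := {f | ∀ n, 0 ≤ coeff n f}
  mul_mem' hf hg n := by
    rw [coeff_mul]
    exact sum_nonneg fun p _ ↦ mul_nonneg (hf p.1) (hg p.2)
  one_mem' n := by
    rw [coeff_one]
    split_ifs
    exacts [zero_le_one, le_rfl]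
  add_mem' hf hg n := add_nonneg (hf n) (hg n)
  zero_mem' _ := le_rfl

lemma coeff_mul_pos {R : Type*} [Semiring R] [PartialOrder R] [IsStrictOrderedRing R]
    {f g : R⟦X⟧} {n : ℕ} (hf : f ∈ nonnegCoeff R) (hg : g ∈ nonnegCoeff R)
    (hfn : 0 < coeff n f) (hg0 : 0 < constantCoeff g) : 0 < coeff n (f * g) := by
  rw [coeff_mul]
  refine sum_pos' (fun p _ ↦ mul_nonneg (hf p.1) (hg p.2)) ⟨(n, 0), by simp, ?_⟩
  exact mul_pos hfn (by simpa using hg0)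

variable {K : Type*} [Field K] [LinearOrder K] [IsStrictOrderedRing K]

lemma one_sub_X_inv_mem_nonnegCoeff : (1 - X : K⟦X⟧)⁻¹ ∈ nonnegCoeff K := fun n ↦ by
  rw [coeff_one_sub_X_inv]
  exact zero_le_one

lemma one_add_X_mem_nonnegCoeff : (1 + X : K⟦X⟧) ∈ nonnegCoeff K := fun n ↦ by
  rw [map_add, coeff_one, coeff_X]
  positivity

lemma one_sub_X_sq_inv_mem_nonnegCoeff : (1 - X ^ 2 : K⟦X⟧)⁻¹ ∈ nonnegCoeff K := fun n ↦ by
  rw [coeff_one_sub_X_sq_inv]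
  split_ifs <;> norm_num

end NonnegCoeff

section GleasonResidue

open PowerSeries

lemma pow_mul_pow_add_of_mul_eq_one {M : Type*} [CommMonoid M] {a b : M} (hab : a * b = 1)
    (k l : ℕ) : a ^ k * b ^ (k + l) = b ^ l := by
  rw [pow_add, ← mul_assoc, ← mul_pow, hab, one_pow, one_mul]

/-- By Lagrange–Bürmann, the `J`-th coefficient of this series is, up to the factor
`-m / (J + 1)`, the coefficient of `g ^ (J + 1)` in the expansion of `(1 + X) ^ (-m)` in powers of
`g = X * (1 - X) ^ 2 / (1 + X) ^ 4`. -/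
noncomputable def gleasonResidue (m J : ℕ) : ℚ⟦X⟧ :=
  ((1 + X)⁻¹) ^ (m + 1) * ((1 + X) ^ 4 * ((1 - X)⁻¹) ^ 2) ^ (J + 1)

variable {m J : ℕ}

lemma gleasonResidue_eq_of_add_eq {s : ℕ} (hs : m + 1 + s = 6 * J + 5) :
    gleasonResidue m J = (1 - X)⁻¹ * ((1 + X) ^ s * ((1 - X ^ 2)⁻¹) ^ (2 * J + 1)) := by
  have hinv : (1 + X : ℚ⟦X⟧)⁻¹ * (1 + X) = 1 := PowerSeries.inv_mul_cancel _ (by simp)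
  rw [gleasonResidue, ← one_add_X_inv_mul_one_sub_X_inv, mul_pow,
    ← pow_mul_pow_add_of_mul_eq_one hinv (m + 1) s, hs,
    ← pow_mul, ← pow_mul_pow_add_of_mul_eq_one hinv (2 * J + 1) (4 * (J + 1)),
    show 2 * J + 1 + 4 * (J + 1) = 6 * J + 5 by lia]
  ring

lemma gleasonResidue_add (t : ℕ) :
    gleasonResidue (6 * J + 5 + t) J = ((1 + X)⁻¹) ^ t * ((1 - X ^ 2)⁻¹) ^ (2 * J + 2) := by
  have hpow := pow_mul_pow_add_of_mul_eq_one (one_add_X_mul_inv (K := ℚ)) (4 * (J + 1))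
    (2 * J + 2 + t)
  rw [show 4 * (J + 1) + (2 * J + 2 + t) = 6 * J + 5 + t + 1 by lia] at hpow
  rw [gleasonResidue, ← one_add_X_inv_mul_one_sub_X_inv, mul_pow, ← pow_mul, ← mul_assoc,
    mul_comm (_ ^ (6 * J + 5 + t + 1)), hpow]
  ring

lemma coeff_gleasonResidue_pos (hm : m < 6 * J + 5) : 0 < coeff J (gleasonResidue m J) := by
  obtain ⟨s, hs⟩ : ∃ s, m + 1 + s = 6 * J + 5 := ⟨6 * J + 4 - m, by lia⟩
  rw [gleasonResidue_eq_of_add_eq hs]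
  refine coeff_mul_pos one_sub_X_inv_mem_nonnegCoeff ?_ ?_ ?_
  · exact mul_mem (pow_mem one_add_X_mem_nonnegCoeff _) (pow_mem one_sub_X_sq_inv_mem_nonnegCoeff _)
  · simp [coeff_one_sub_X_inv]
  · simp

lemma coeff_gleasonResidue_ne_zero_of_lt (hm : 6 * J + 5 < m) :
    coeff J (gleasonResidue m J) ≠ 0 := by
  obtain ⟨t, rfl⟩ : ∃ t, m = 6 * J + 5 + (t + 1) := ⟨m - (6 * J + 6), by lia⟩
  have hpos : 0 < coeff J (rescale (-1 : ℚ) (gleasonResidue (6 * J + 5 + (t + 1)) J)) := by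
    rw [gleasonResidue_add, map_mul, map_pow, map_pow, rescale_neg_one_one_add_X_inv,
      rescale_neg_one_one_sub_X_sq_inv, pow_succ', mul_assoc]
    refine coeff_mul_pos one_sub_X_inv_mem_nonnegCoeff ?_ ?_ ?_
    · exact mul_mem (pow_mem one_sub_X_inv_mem_nonnegCoeff _)
        (pow_mem one_sub_X_sq_inv_mem_nonnegCoeff _)
    · simp [coeff_one_sub_X_inv]
    · simp
  rw [coeff_rescale] at hpos
  exact right_ne_zero_of_mul hpos.ne'

lemma coeff_gleasonResidue_pos_of_even (hJ : Even J) :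
    0 < coeff J (gleasonResidue (6 * J + 5) J) := by
  have h := gleasonResidue_add (J := J) 0
  rw [add_zero, pow_zero, one_mul, pow_succ'] at h
  rw [h]
  refine coeff_mul_pos one_sub_X_sq_inv_mem_nonnegCoeff
    (pow_mem one_sub_X_sq_inv_mem_nonnegCoeff _) ?_ ?_
  · simp [coeff_one_sub_X_sq_inv, hJ]
  · simp

lemma eq_and_odd_of_coeff_gleasonResidue_eq_zero (h : coeff J (gleasonResidue m J) = 0) :
    m = 6 * J + 5 ∧ Odd J := by
  obtain rfl : m = 6 * J + 5 := by
    by_contra! hm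
    obtain hlt | hgt := hm.lt_or_gt
    · exact (coeff_gleasonResidue_pos hlt).ne' h
    · exact coeff_gleasonResidue_ne_zero_of_lt hgt h
  exact ⟨rfl, Nat.not_even_iff_odd.1 fun hJ ↦ (coeff_gleasonResidue_pos_of_even hJ).ne' h⟩

lemma coe_gleasonPoly_mul_inv_pow {j : ℕ} (hj : 4 * j ≤ m) :
    (gleasonPoly m j : ℚ⟦X⟧) * ((1 + X)⁻¹) ^ m =
      (X * (1 - X) ^ 2 * ((1 + X)⁻¹) ^ 4) ^ j := by
  have h := pow_mul_pow_add_of_mul_eq_one (one_add_X_mul_inv (K := ℚ)) (m - 4 * j) (4 * j)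
  rw [Nat.sub_add_cancel hj] at h
  simp only [gleasonPoly, Polynomial.coe_mul, Polynomial.coe_pow, Polynomial.coe_X,
    Polynomial.coe_add, Polynomial.coe_sub, Polynomial.coe_one]
  rw [mul_assoc, h, mul_pow _ (_ ^ 4), ← pow_mul]

variable {F Q : Polynomial ℚ}

lemma coe_mul_inv_pow_eq_aeval (hF : 4 * F.natDegree ≤ m)
    (hQ : Q = ∑ j ∈ range (m / 4 + 1), Polynomial.C (F.coeff j) * gleasonPoly m j) :
    (Q : ℚ⟦X⟧) * ((1 + X)⁻¹) ^ m =
      Polynomial.aeval (X * (1 - X) ^ 2 * ((1 + X)⁻¹) ^ 4 : ℚ⟦X⟧) F := by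
  rw [Polynomial.aeval_eq_sum_range' (n := m / 4 + 1) (by lia), hQ,
    ← Polynomial.coeToPowerSeries.ringHom_apply, map_sum, sum_mul]
  refine sum_congr rfl fun j hj ↦ ?_
  rw [← coe_gleasonPoly_mul_inv_pow (m := m) (by grind)]
  simp [smul_eq_C_mul, mul_assoc]

lemma derivative_one_add_X_inv_pow :
    d⁄dX ℚ (((1 + X)⁻¹) ^ m) = -(m • ((1 + X)⁻¹) ^ (m + 1)) := by
  obtain _ | m := m
  · simp
  have hX : d⁄dX ℚ (1 + X) = 1 := by simp
  rw [Derivation.leibniz_pow, derivative_inv', hX, Nat.add_sub_cancel, nsmul_eq_mul,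
    nsmul_eq_mul, smul_eq_mul]
  ring

lemma coeff_gleasonResidue_eq_zero (hm : m ≠ 0) (hF : 4 * F.natDegree ≤ m)
    (hQ : Q = ∑ j ∈ range (m / 4 + 1), Polynomial.C (F.coeff j) * gleasonPoly m j)
    (hFJ : F.natDegree ≤ J) (hQ1 : Polynomial.X ^ (J + 2) ∣ Q - 1) :
    coeff J (gleasonResidue m J) = 0 := by
  have hgh : X * (1 - X) ^ 2 * ((1 + X)⁻¹) ^ 4 * ((1 + X) ^ 4 * ((1 - X)⁻¹) ^ 2) =
      (X : ℚ⟦X⟧) := by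
    calc
      _ = (X : ℚ⟦X⟧) * ((1 + X) * (1 + X)⁻¹) ^ 4 * ((1 - X) * (1 - X)⁻¹) ^ 2 := by ring
      _ = X := by rw [one_add_X_mul_inv, one_sub_X_mul_inv, one_pow, one_pow, mul_one, mul_one]
  have hdvd : (X : ℚ⟦X⟧) ^ (J + 2) ∣ ((1 + X)⁻¹) ^ m -
      Polynomial.aeval (X * (1 - X) ^ 2 * ((1 + X)⁻¹) ^ 4 : ℚ⟦X⟧) F := by
    obtain ⟨P, hP⟩ := hQ1
    rw [← coe_mul_inv_pow_eq_aeval hF hQ, eq_add_of_sub_eq hP]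
    refine ⟨-P * ((1 + X)⁻¹) ^ m, ?_⟩
    push_cast
    ring
  have h := coeff_derivative_mul_pow_eq_zero hgh hFJ hdvd
  rw [derivative_one_add_X_inv_pow, neg_mul, smul_mul_assoc, map_neg, map_nsmul, neg_eq_zero] at h
  exact (smul_eq_zero.1 h).resolve_left hm

end GleasonResidue

section BinaryVectors

variable {ι : Type*} [Fintype ι]

lemma hWt_eq_hammingNorm (x : ι → ZMod 2) : hWt x = hammingNorm x := rfl

lemma hWt_le_card (x : ι → ZMod 2) : hWt x ≤ Fintype.card ι := card_le_univ _

lemma hWt_ne_zero {x : ι → ZMod 2} (hx : x ≠ 0) : hWt x ≠ 0 := by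
  rwa [hWt_eq_hammingNorm, hammingNorm_ne_zero_iff]

lemma hWt_one : hWt (1 : ι → ZMod 2) = Fintype.card ι := by simp [hWt]

lemma natCast_hWt (x : ι → ZMod 2) : (hWt x : ZMod 2) = ∑ i, x i := by
  rw [hWt, ← sum_boole]
  refine sum_congr rfl fun i _ ↦ ?_
  generalize x i = a
  revert a
  decide

lemma hWt_add_add_two_mul_hWt_mul (x y : ι → ZMod 2) :
    hWt (x + y) + 2 * hWt (x * y) = hWt x + hWt y := by
  simp only [hWt, card_filter, mul_sum, ← sum_add_distrib, Pi.add_apply, Pi.mul_apply]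
  refine sum_congr rfl fun i _ ↦ ?_
  generalize x i = a
  generalize y i = b
  revert a b
  decide

lemma pow_mul_pow_hWt {R : Type*} [CommMonoid R] (a b : R) (x : ι → ZMod 2) :
    a ^ (Fintype.card ι - hWt x) * b ^ hWt x = ∏ i, if x i = 0 then a else b := by
  classical
  rw [prod_ite, prod_const, prod_const, hWt, ← card_compl, compl_filter]
  simp only [not_not, ne_eq]

lemma minHam_le_hWt {C : Set (ι → ZMod 2)} {x : ι → ZMod 2} (hx : x ∈ C) (h0 : x ≠ 0) :
    minHam C ≤ hWt x := Nat.sInf_le ⟨x, hx, h0, rfl⟩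

end BinaryVectors

namespace SelfDual2

variable {ι : Type*} [Fintype ι] {D : Submodule (ZMod 2) (ι → ZMod 2)} {x y : ι → ZMod 2}

lemma mem_iff (hD : SelfDual2 D) : x ∈ D ↔ x ∈ dual2 (D : Set (ι → ZMod 2)) :=
  Set.ext_iff.1 hD x

lemma even_hWt_mul (hD : SelfDual2 D) (hx : x ∈ D) (hy : y ∈ D) : Even (hWt (x * y)) := by
  rw [even_iff_two_dvd, ← ZMod.natCast_eq_zero_iff, natCast_hWt]
  exact hD.mem_iff.1 hx y hy

lemma even_hWt (hD : SelfDual2 D) (hx : x ∈ D) : Even (hWt x) := by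
  have hxx : x * x = x := funext fun i ↦ by
    rw [Pi.mul_apply, ← pow_two, ZMod.pow_card (p := 2)]
  simpa only [hxx] using hD.even_hWt_mul hx hx

lemma one_mem (hD : SelfDual2 D) : (1 : ι → ZMod 2) ∈ D := by
  refine hD.mem_iff.2 fun y hy ↦ ?_
  simp only [Pi.one_apply, one_mul]
  rw [← natCast_hWt, ZMod.natCast_eq_zero_iff_even]
  exact hD.even_hWt hy

lemma even_card (hD : SelfDual2 D) : Even (Fintype.card ι) := by
  simpa only [hWt_one] using hD.even_hWt hD.one_mem

lemma even_minHam (hD : SelfDual2 D) : Even (minHam (D : Set (ι → ZMod 2))) := by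
  rw [minHam]
  obtain h | h := Set.eq_empty_or_nonempty {d | ∃ x ∈ (D : Set (ι → ZMod 2)), x ≠ 0 ∧ hWt x = d}
  · rw [h, Nat.sInf_empty]
    exact Even.zero
  · obtain ⟨x, hx, -, hxd⟩ := Nat.sInf_mem h
    exact hxd ▸ hD.even_hWt hx

end SelfDual2

section MacWilliams

variable {ι : Type*} [Fintype ι] {R : Type*} [CommRing R]

variable (R) in
/-- The additive character `0 ↦ 1`, `1 ↦ -1` of `ZMod 2`. -/
def signChar : AddChar (ZMod 2) R := AddChar.zmodChar 2 neg_one_sq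

lemma signChar_natCast (n : ℕ) : signChar R n = (-1) ^ n := AddChar.zmodChar_apply' neg_one_sq n

lemma signChar_one : signChar R 1 = -1 := by simpa using signChar_natCast (R := R) 1

lemma signChar_eq_one_iff [CharZero R] {a : ZMod 2} : signChar R a = 1 ↔ a = 0 := by
  have hne : (-1 : R) ≠ 1 := by norm_num
  obtain rfl | rfl : a = 0 ∨ a = 1 := by revert a; decide
  · simp
  · simp [signChar_one, hne]

lemma signChar_eq_one_or_neg_one (a : ZMod 2) : signChar R a = 1 ∨ signChar R a = -1 := by
  rw [← ZMod.natCast_zmod_val a, signChar_natCast]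
  exact neg_one_pow_eq_or R _

variable (R) in
/-- The additive character `c ↦ (-1) ^ ⟨v, c⟩` of the space of binary vectors. -/
def dotChar (v : ι → ZMod 2) : AddChar (ι → ZMod 2) R :=
  (signChar R).compAddMonoidHom (dotProductBilin ℕ (ZMod 2) v).toAddMonoidHom

lemma dotChar_apply (v c : ι → ZMod 2) : dotChar R v c = signChar R (∑ i, v i * c i) := rfl

lemma dotChar_eq_prod (v c : ι → ZMod 2) : dotChar R v c = ∏ i, signChar R (v i * c i) :=
  map_sum (signChar R).toAddMonoidHom (fun i ↦ v i * c i) univ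

lemma sum_pow_mul_pow_hWt_mul_dotChar [DecidableEq ι] (a b : R) (c : ι → ZMod 2) :
    ∑ v : ι → ZMod 2, a ^ (Fintype.card ι - hWt v) * b ^ hWt v * dotChar R v c =
      (a + b) ^ (Fintype.card ι - hWt c) * (a - b) ^ hWt c := by
  have coordinate_sum (i : ι) :
      ∑ s : ZMod 2, (if s = 0 then a else b) * signChar R (s * c i) =
        if c i = 0 then a + b else a - b := by
    have huniv : (univ : Finset (ZMod 2)) = {0, 1} := rfl
    obtain hc | hc : c i = 0 ∨ c i = 1 := by generalize c i = t; revert t; decide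
    · simp [huniv, hc]
    · simp [huniv, hc, signChar_one, sub_eq_add_neg]
  simp only [pow_mul_pow_hWt, dotChar_eq_prod, ← prod_mul_distrib, ← coordinate_sum,
    prod_univ_sum, Fintype.piFinset_univ]

open scoped Classical in
lemma sum_addChar_mul_pow_mul_pow_hWt [IsDomain R] {D : Submodule (ZMod 2) (ι → ZMod 2)}
    (a b : R) (ψ : AddChar D R) :
    ∑ c : D, ψ c * ((a + b) ^ (Fintype.card ι - hWt c.1) * (a - b) ^ hWt c.1) =
      Nat.card D * ∑ v with ∀ c : D, ψ c * dotChar R v c.1 = 1,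
        a ^ (Fintype.card ι - hWt v) * b ^ hWt v := by
  have character_sum (v : ι → ZMod 2) : ∑ c : D, ψ c * dotChar R v c.1 =
      if ∀ c : D, ψ c * dotChar R v c.1 = 1 then (Nat.card D : R) else 0 := by
    have h := AddChar.sum_eq_ite
      (ψ * (dotChar R v).compAddMonoidHom D.subtype.toAddMonoidHom)
    simpa [DFunLike.ext_iff] using h
  calc
    _ = ∑ v, a ^ (Fintype.card ι - hWt v) * b ^ hWt v * ∑ c : D, ψ c * dotChar R v c.1 := by
      simp only [← sum_pow_mul_pow_hWt_mul_dotChar, mul_sum]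
      rw [sum_comm]
      exact sum_congr rfl fun v _ ↦ sum_congr rfl fun c _ ↦ mul_left_comm _ _ _
    _ = _ := by
      simp only [character_sum, mul_ite, mul_zero, ← sum_filter, mul_comm _ (Nat.card D : R),
        ← mul_sum]

end MacWilliams

namespace SelfDual2

variable {ι : Type*} [Fintype ι] {D : Submodule (ZMod 2) (ι → ZMod 2)}
  {R : Type*} [CommRing R]

lemma mem_iff_forall_dotChar_eq_one [CharZero R] (hD : SelfDual2 D) {v : ι → ZMod 2} :
    v ∈ D ↔ ∀ c : D, dotChar R v c.1 = 1 := by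
  rw [hD.mem_iff]
  simp only [dual2, dotChar_apply, signChar_eq_one_iff, Set.mem_ofPred_eq, SetLike.mem_coe,
    Subtype.forall]

open scoped Classical in
lemma sum_mul_pow_hWt [IsDomain R] [CharZero R] (hD : SelfDual2 D) (a b : R) :
    ∑ c : D, (a + b) ^ (Fintype.card ι - hWt c.1) * (a - b) ^ hWt c.1 =
      Nat.card D * ∑ c : D, a ^ (Fintype.card ι - hWt c.1) * b ^ hWt c.1 := by
  have h := sum_addChar_mul_pow_mul_pow_hWt a b (1 : AddChar D R)
  simp only [AddChar.one_apply, one_mul, ← hD.mem_iff_forall_dotChar_eq_one] at h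
  rw [h, sum_subtype (p := (· ∈ D)) _ (by simp)]

lemma natCard_eq (hD : SelfDual2 D) : Nat.card D = 2 ^ (Fintype.card ι / 2) := by
  classical
  have h := hD.sum_mul_pow_hWt (1 : ℤ) 1
  rw [sum_eq_single 0 (fun c _ hc ↦ by
    simp [hWt_ne_zero (x := c.1) (by simpa using hc)]) (by simp)] at h
  have hsq : (2 : ℤ) ^ Fintype.card ι = Nat.card D ^ 2 := by
    simpa [hWt, one_add_one_eq_two, pow_two] using h
  rw [← Nat.div_mul_cancel hD.even_card.two_dvd, pow_mul] at hsq
  exact ((pow_left_inj₀ (by positivity) (by positivity) two_ne_zero).1 (mod_cast hsq)).symm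

variable (R) in
/-- The additive character `c ↦ (-1) ^ (wt c / 2)` of a self-dual code, whose kernel is the
doubly even subcode. -/
def halfWtChar (hD : SelfDual2 D) : AddChar D R where
  toFun c := (-1) ^ (hWt c.1 / 2)
  map_zero_eq_one' := by simp [hWt]
  map_add_eq_mul' x y := by
    have hxy := hWt_add_add_two_mul_hWt_mul x.1 y.1
    obtain ⟨p, hp⟩ := hD.even_hWt x.2
    obtain ⟨q, hq⟩ := hD.even_hWt y.2
    obtain ⟨r, hr⟩ := hD.even_hWt_mul x.2 y.2
    rw [← pow_add, neg_one_pow_congr]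
    rw [Submodule.coe_add, Nat.even_iff, Nat.even_iff]
    omega

lemma halfWtChar_apply (hD : SelfDual2 D) (c : D) :
    hD.halfWtChar R c = (-1) ^ (hWt c.1 / 2) := rfl

lemma halfWtChar_eq_one_iff [CharZero R] (hD : SelfDual2 D) {c : D} :
    hD.halfWtChar R c = 1 ↔ 4 ∣ hWt c.1 := by
  have hne : (-1 : R) ≠ 1 := by norm_num
  have := Nat.even_iff.1 (hD.even_hWt c.2)
  rw [halfWtChar_apply, neg_one_pow_eq_one_iff_even hne, Nat.even_iff]
  omega

lemma halfWtChar_eq_neg_one [CharZero R] (hD : SelfDual2 D) {c : D} (hc : ¬ 4 ∣ hWt c.1) :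
    hD.halfWtChar R c = -1 :=
  (neg_one_pow_eq_or R _).resolve_left fun h ↦ hc (hD.halfWtChar_eq_one_iff.1 h)

lemma mem_shadow_iff [CharZero R] (hD : SelfDual2 D)
    (hse : SinglyEven (D : Set (ι → ZMod 2))) {v : ι → ZMod 2} : v ∈ shadow (D : Set (ι → ZMod 2)) ↔
      ∀ c : D, hD.halfWtChar R c * dotChar R v c.1 = 1 := by
  constructor
  · rintro ⟨hv, hvD⟩ c
    have eq_one {y : D} (hy : 4 ∣ hWt y.1) : hD.halfWtChar R y * dotChar R v y.1 = 1 := by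
      rw [hD.halfWtChar_eq_one_iff.2 hy, one_mul, dotChar_apply, signChar_eq_one_iff]
      exact hv _ ⟨y.2, hy⟩
    obtain ⟨c₀, hc₀⟩ : ∃ c₀ : D, dotChar R v c₀.1 ≠ 1 := by
      rwa [SetLike.mem_coe, hD.mem_iff_forall_dotChar_eq_one (R := R), not_forall] at hvD
    have hc₀4 : ¬ 4 ∣ hWt c₀.1 := fun h ↦ hc₀ <| by
      rw [← eq_one h, hD.halfWtChar_eq_one_iff.2 h, one_mul]
    have hcoset : dotChar R v c₀.1 = -1 := (signChar_eq_one_or_neg_one _).resolve_left hc₀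
    by_cases hc : 4 ∣ hWt c.1
    · exact eq_one hc
    have hadd := eq_one (y := c₀ + c) <| by
      rw [← hD.halfWtChar_eq_one_iff (R := R), AddChar.map_add_eq_mul,
        hD.halfWtChar_eq_neg_one hc₀4, hD.halfWtChar_eq_neg_one hc, neg_mul_neg, one_mul]
    simpa [AddChar.map_add_eq_mul, hD.halfWtChar_eq_neg_one hc₀4, hcoset] using hadd
  · refine fun h ↦ ⟨fun y hy ↦ ?_, fun hvD ↦ ?_⟩
    · have := h ⟨y, hy.1⟩
      rwa [hD.halfWtChar_eq_one_iff.2 hy.2, one_mul, dotChar_apply, signChar_eq_one_iff] at this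
    · obtain ⟨y, hyD, hy⟩ := hse
      have := h ⟨y, hyD⟩
      rw [hD.mem_iff_forall_dotChar_eq_one.1 hvD, mul_one, hD.halfWtChar_eq_one_iff] at this
      exact hy this

end SelfDual2

section HalfWeightEnumerator

open Polynomial

variable {ι : Type*} [Fintype ι] {D : Submodule (ZMod 2) (ι → ZMod 2)}

open scoped Classical in
/-- The weight enumerator `W` of a code with even weights in the variable `X = y²`, that is, the
polynomial with `W(1, y) = halfWeightEnumerator D (y²)`. -/
noncomputable def halfWeightEnumerator (D : Submodule (ZMod 2) (ι → ZMod 2)) : ℚ[X] :=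
  ∑ c : D, X ^ (hWt c.1 / 2)

lemma natDegree_halfWeightEnumerator_le :
    (halfWeightEnumerator D).natDegree ≤ Fintype.card ι / 2 :=
  natDegree_sum_le_of_forall_le _ _ fun c _ ↦
    (natDegree_X_pow_le _).trans (Nat.div_le_div_right (hWt_le_card c.1))

lemma halfWeightEnumerator_ne_zero : halfWeightEnumerator D ≠ 0 := fun h ↦ by
  simpa [halfWeightEnumerator, eval_finsetSum] using congr(eval 1 $h)

lemma X_pow_dvd_halfWeightEnumerator_sub_one {e : ℕ} (he : 2 * e ≤ minHam (D : Set (ι → ZMod 2))) :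
    X ^ e ∣ halfWeightEnumerator D - 1 := by
  classical
  rw [halfWeightEnumerator, ← add_sum_erase _ _ (mem_univ 0)]
  simp only [ZeroMemClass.coe_zero, hWt_eq_hammingNorm, hammingNorm_zero, Nat.zero_div, pow_zero,
    add_sub_cancel_left]
  refine dvd_sum fun c hc ↦ pow_dvd_pow _ ?_
  have := minHam_le_hWt c.2 (by simpa using hc)
  rw [← hWt_eq_hammingNorm]
  lia

open scoped Classical in
lemma homogAeval_halfWeightEnumerator (hD : SelfDual2 D) {A : Type*} [CommRing A] [Algebra ℚ A]
    (s a b : A) :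
    homogAeval (Fintype.card ι / 2) (a ^ 2) (s * b ^ 2) (halfWeightEnumerator D) =
      ∑ c : D, s ^ (hWt c.1 / 2) * (a ^ (Fintype.card ι - hWt c.1) * b ^ hWt c.1) := by
  rw [halfWeightEnumerator, map_sum]
  refine sum_congr rfl fun c _ ↦ ?_
  have hle := hWt_le_card c.1
  obtain ⟨w, hw⟩ := hD.even_hWt c.2
  obtain ⟨n, hn⟩ := hD.even_card
  rw [homogAeval_X_pow _ _ (by lia), mul_pow, ← pow_mul, ← pow_mul,
    show 2 * (hWt c.1 / 2) = hWt c.1 by lia,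
    show 2 * (Fintype.card ι / 2 - hWt c.1 / 2) = Fintype.card ι - hWt c.1 by lia]
  ring

lemma SelfDual2.macWilliamsInvariant (hD : SelfDual2 D) :
    MacWilliamsInvariant (Fintype.card ι / 2) (halfWeightEnumerator D) := by
  classical
  have h := homogAeval_halfWeightEnumerator hD (1 : ℚ[X]) (1 + X) (1 - X)
  simp only [one_mul, one_pow, hD.sum_mul_pow_hWt] at h
  rw [MacWilliamsInvariant, h, halfWeightEnumerator, map_sum, hD.natCard_eq]
  congr 1
  · simp
  · refine sum_congr rfl fun c _ ↦ ?_
    rw [map_pow, expand_X, ← pow_mul, Nat.mul_div_cancel' (hD.even_hWt c.2).two_dvd]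

open scoped Classical in
lemma homogAeval_shadow (hD : SelfDual2 D) (hse : SinglyEven (D : Set (ι → ZMod 2))) :
    homogAeval (Fintype.card ι / 2) ((1 + X) ^ 2) (-(1 - X) ^ 2) (halfWeightEnumerator D) =
      2 ^ (Fintype.card ι / 2) *
        ∑ v with v ∈ shadow (D : Set (ι → ZMod 2)), (X : ℚ[X]) ^ hWt v := by
  have h := sum_addChar_mul_pow_mul_pow_hWt 1 (X : ℚ[X]) (hD.halfWtChar ℚ[X])
  simp only [← hD.mem_shadow_iff hse, hD.natCard_eq, one_pow, one_mul] at h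
  rw [← neg_one_mul, homogAeval_halfWeightEnumerator hD]
  simpa only [SelfDual2.halfWtChar_apply, Nat.cast_pow, Nat.cast_ofNat] using h

lemma exists_mem_shadow_hWt_eq (hD : SelfDual2 D) (hse : SinglyEven (D : Set (ι → ZMod 2)))
    {F : ℚ[X]} (hF : 4 * F.natDegree ≤ Fintype.card ι / 2)
    (hDF : halfWeightEnumerator D = ∑ j ∈ range (Fintype.card ι / 2 / 4 + 1),
      C (F.coeff j) * gleasonPoly (Fintype.card ι / 2) j) :
    ∃ v ∈ shadow (D : Set (ι → ZMod 2)), hWt v = Fintype.card ι / 2 - 4 * F.natDegree := by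
  classical
  have hF0 : F ≠ 0 := by
    rintro rfl
    exact halfWeightEnumerator_ne_zero (by simpa using hDF)
  by_contra! hne
  have hcoeff := coeff_homogAeval_sum_gleasonPoly_shadow hF
  rw [← hDF, homogAeval_shadow hD hse, ← map_ofNat C, ← C_pow, coeff_C_mul, finsetSum_coeff,
    sum_eq_zero (fun v hv ↦ by
      rw [coeff_X_pow, if_neg (hne v (mem_filter.1 hv).2).symm]), mul_zero] at hcoeff
  simp [hF0] at hcoeff

end HalfWeightEnumerator

end Z4Note

open Z4Note in
theorem shadow_small_weight_length24k8_general {ι : Type*} [Fintype ι]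
    (D : Submodule (ZMod 2) (ι → ZMod 2)) (hsd : SelfDual2 D)
    (hse : SinglyEven (D : Set (ι → ZMod 2)))
    (hexc : ¬ (Fintype.card ι % 24 = 22 ∧
      minHam (D : Set (ι → ZMod 2)) = 4 * (Fintype.card ι / 24) + 6)) :
    ∃ v ∈ shadow (D : Set (ι → ZMod 2)),
      hWt v + 2 * minHam (D : Set (ι → ZMod 2)) ≤ Fintype.card ι / 2 + 4 := by
  set m := Fintype.card ι / 2
  have hm : m ≠ 0 := by
    obtain ⟨x, -, hx⟩ := hse
    have := hWt_le_card x
    have := hsd.even_card.two_dvd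
    have : hWt x ≠ 0 := fun h ↦ hx (h ▸ dvd_zero 4)
    lia
  obtain ⟨F, hF, hDF⟩ := hsd.macWilliamsInvariant.exists_eq_sum_gleasonPoly
    natDegree_halfWeightEnumerator_le
  obtain ⟨v, hv, hwt⟩ := exists_mem_shadow_hWt_eq hsd hse hF hDF
  refine ⟨v, hv, ?_⟩
  by_contra! hlt
  have hd := hsd.even_minHam.two_dvd
  have length_eq {J : ℕ} (hFJ : F.natDegree ≤ J)
      (hJ : 2 * (J + 2) ≤ minHam (D : Set (ι → ZMod 2))) : m = 6 * J + 5 ∧ Odd J :=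
    eq_and_odd_of_coeff_gleasonResidue_eq_zero <|
      coeff_gleasonResidue_eq_zero hm hF hDF hFJ (X_pow_dvd_halfWeightEnumerator_sub_one hJ)
  obtain ⟨hmJ, l, hl⟩ := length_eq le_rfl (by lia)
  have hn := hsd.even_card.two_dvd
  -- Outside the exceptional case the minimum weight also allows `J = deg F + 1`.
  have := (length_eq F.natDegree.le_succ (by lia)).1
  lia

open Z4Note in
/-- the shadow of a binary singly even self-dual code of length `24k+8`
with minimum weight `4k+4` contains a vector of weight at most `4k`. -/
theorem shadow_small_weight_length24k8
    (k : ℕ) (hk : 0 < k)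
    (D : Submodule (ZMod 2) (Fin (24 * k + 8) → ZMod 2))
    (hsd : SelfDual2 D)
    (hse : SinglyEven (D : Set (Fin (24 * k + 8) → ZMod 2)))
    (hmin : minHam (D : Set (Fin (24 * k + 8) → ZMod 2)) = 4 * k + 4) :
    ∃ v ∈ shadow (D : Set (Fin (24 * k + 8) → ZMod 2)), hWt v ≤ 4 * k := by
  obtain ⟨v, hv, hwt⟩ := shadow_small_weight_length24k8_general D hsd hse
    (by rw [Fintype.card_fin]; lia)
  rw [hmin, Fintype.card_fin] at hwt
  exact ⟨v, hv, by lia⟩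
end

section
/- The bordered double circulant Z4-code of length 32 determined by (α,β,γ) = (0,1,1) and circulant first row (0,0,2,2,1,0,1,0,0,2,3,3,3,1,2) is a self-dual Type II Z4-code with minimum Lee weight 14, and its residue code is a binary extremal doubly even self-dual code of length 32 (minimum Hamming weight 8). -/
open Finset

/-!
`B * Bᵀ = -1` makes the systematic code `(I | B)` self-dual. As `B` is a circulant matrix with equal
borders, transposing it amounts to the permutation `i ↦ -i` of the circulant indices, so that the
code has an automorphism exchanging the two halves of a word up to sign. A nonzero word of Lee
weight at most `13` would have a half of Lee weight at most `6`, without loss of generality the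
left one, which leaves a finite search over the information symbols.

The Euclidean weight is `#odd + 4 * #2` and divisible by `8`. A word with more than `8` odd
coordinates thus has either `12` of them and at least one `2`, or at least `16`; both give Lee
weight at least `14`. The search therefore skips all residue words of Hamming weight greater than
`8`.

Doubling a word maps the residue code into the code and doubles the weight, so residue words have
Hamming weight at least `7`, and hence at least `8` because the residue code is doubly even.
-/

namespace Z4Note

open Matrix

section Weights

variable {ι κ : Type*} [Fintype ι] [Fintype κ]

theorem hWt_res2_eq_sum (x : ι → ZMod 4) : hWt (res2 x) = ∑ i, (x i).val % 2 := by
  have h : ∀ a : ZMod 4,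
      (if ZMod.castHom (by norm_num : (2 : ℕ) ∣ 4) (ZMod 2) a ≠ 0 then 1 else 0) = a.val % 2 := by
    decide
  rw [hWt, card_filter]
  exact sum_congr rfl fun i _ => h (x i)

theorem leeWt_eq_hWt_add_nCount (x : ι → ZMod 4) :
    leeWt x = hWt (res2 x) + 2 * nCount 2 x := by
  have h : ∀ a : ZMod 4, leeVal a = a.val % 2 + 2 * if a = 2 then 1 else 0 := by decide
  simp only [leeWt, h, sum_add_distrib, mul_sum, hWt_res2_eq_sum, nCount, card_filter]

theorem eucWt_eq_hWt_add_nCount (x : ι → ZMod 4) :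
    eucWt x = hWt (res2 x) + 4 * nCount 2 x := by
  have h : ∀ a : ZMod 4, leeVal a ^ 2 = a.val % 2 + 4 * if a = 2 then 1 else 0 := by decide
  simp only [eucWt, h, sum_add_distrib, mul_sum, hWt_res2_eq_sum, nCount, card_filter]

theorem leeWt_two_smul (x : ι → ZMod 4) : leeWt ((2 : ZMod 4) • x) = 2 * hWt (res2 x) := by
  have h : ∀ a : ZMod 4, leeVal (2 * a) = 2 * (a.val % 2) := by decide
  simp only [leeWt, Pi.smul_apply, smul_eq_mul, h, hWt_res2_eq_sum, mul_sum]

theorem leeWt_neg (x : ι → ZMod 4) : leeWt (-x) = leeWt x := by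
  have h : ∀ a : ZMod 4, leeVal (-a) = leeVal a := by decide
  simp only [leeWt, Pi.neg_apply, h]

theorem leeWt_eq_zero_iff {x : ι → ZMod 4} : leeWt x = 0 ↔ x = 0 := by
  have h : ∀ a : ZMod 4, leeVal a = 0 ↔ a = 0 := by decide
  simp only [leeWt, sum_eq_zero_iff, mem_univ, true_imp_iff, h, funext_iff, Pi.zero_apply]

theorem leeWt_comp_equiv (e : κ ≃ ι) (x : ι → ZMod 4) : leeWt (x ∘ e) = leeWt x :=
  e.sum_comp fun i => leeVal (x i)

theorem leeWt_sumElim (x : ι → ZMod 4) (y : κ → ZMod 4) :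
    leeWt (Sum.elim x y) = leeWt x + leeWt y :=
  Fintype.sum_sum_type _

theorem hWt_res2_sumElim (x : ι → ZMod 4) (y : κ → ZMod 4) :
    hWt (res2 (Sum.elim x y)) = hWt (res2 x) + hWt (res2 y) := by
  simp only [hWt_res2_eq_sum, Fintype.sum_sum_type, Sum.elim_inl, Sum.elim_inr]

theorem natCast_eucWt_add_of_dotProduct_eq_zero {x y : ι → ZMod 4} (hxy : x ⬝ᵥ y = 0) :
    (eucWt (x + y) : ZMod 8) = eucWt x + eucWt y := by
  have h : ∀ a b : ZMod 4, ((leeVal (a + b) ^ 2 : ℕ) : ZMod 8) =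
      ((leeVal a ^ 2 + leeVal b ^ 2 + 2 * (a.val * b.val) : ℕ) : ZMod 8) := by decide
  have h4 : 4 ∣ ∑ i, (x i).val * (y i).val := by
    rw [← ZMod.natCast_eq_zero_iff]
    simpa [dotProduct] using hxy
  have h8 : ((2 * ∑ i, (x i).val * (y i).val : ℕ) : ZMod 8) = 0 :=
    (ZMod.natCast_eq_zero_iff _ _).2 (Nat.mul_dvd_mul_left 2 h4)
  calc (eucWt (x + y) : ZMod 8)
      = ((eucWt x + eucWt y + 2 * ∑ i, (x i).val * (y i).val : ℕ) : ZMod 8) := by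
        simp only [eucWt, mul_sum, ← sum_add_distrib, Nat.cast_sum, Pi.add_apply, h]
    _ = eucWt x + eucWt y := by
        rw [Nat.cast_add, h8, add_zero, Nat.cast_add]

theorem natCast_eucWt_smul (c : ZMod 4) (x : ι → ZMod 4) :
    (eucWt (c • x) : ZMod 8) = leeVal c ^ 2 * eucWt x := by
  have h : ∀ a b : ZMod 4, ((leeVal (a * b) ^ 2 : ℕ) : ZMod 8) =
      leeVal a ^ 2 * ((leeVal b ^ 2 : ℕ) : ZMod 8) := by decide
  simp only [eucWt, Nat.cast_sum, Pi.smul_apply, smul_eq_mul, h, mul_sum]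

theorem typeII_span {s : Set (ι → ZMod 4)}
    (horth : (Submodule.span (ZMod 4) s : Set (ι → ZMod 4)) ⊆
      dualZ4 (Submodule.span (ZMod 4) s : Set (ι → ZMod 4)))
    (hs : ∀ x ∈ s, 8 ∣ eucWt x) : TypeII (Submodule.span (ZMod 4) s : Set (ι → ZMod 4)) := by
  intro x hx
  rw [← ZMod.natCast_eq_zero_iff]
  change x ∈ Submodule.span (ZMod 4) s at hx
  induction hx using Submodule.span_induction with
  | mem x h => exact (ZMod.natCast_eq_zero_iff _ _).2 (hs x h)
  | zero => simp [eucWt, leeVal]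
  | add x y hx hy ihx ihy =>
    rw [natCast_eucWt_add_of_dotProduct_eq_zero (horth hx y hy), ihx, ihy, add_zero]
  | smul c x _ ih => rw [natCast_eucWt_smul, ih, mul_zero]

theorem TypeII.doublyEven_residue {C : Set (ι → ZMod 4)} (hC : TypeII C) :
    DoublyEven (residue C) := by
  rintro _ ⟨x, hx, rfl⟩
  have h8 := hC x hx
  rw [eucWt_eq_hWt_add_nCount] at h8
  omega

theorem TypeII.fourteen_le_leeWt {C : Set (ι → ZMod 4)} (hC : TypeII C) {x : ι → ZMod 4}
    (hx : x ∈ C) (hodd : 8 < hWt (res2 x)) : 14 ≤ leeWt x := by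
  have h8 := hC x hx
  rw [eucWt_eq_hWt_add_nCount] at h8
  rw [leeWt_eq_hWt_add_nCount]
  omega

theorem le_two_mul_hWt_of_mem_residue {C : Submodule (ZMod 4) (ι → ZMod 4)} {d : ℕ}
    (hC : ∀ x ∈ C, x ≠ 0 → d ≤ leeWt x) {y : ι → ZMod 2}
    (hy : y ∈ residue (C : Set (ι → ZMod 4))) (hy0 : y ≠ 0) : d ≤ 2 * hWt y := by
  obtain ⟨x, hx, rfl⟩ := hy
  rw [← leeWt_two_smul]
  refine hC _ (C.smul_mem 2 hx) fun h => hy0 (hammingNorm_eq_zero.1 ?_)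
  have h0 := leeWt_two_smul x
  rw [h, leeWt_eq_zero_iff.2 rfl] at h0
  change hWt (res2 x) = 0
  omega

end Weights

section SystematicCodes

variable {R S ι κ : Type*} [CommRing R] [CommRing S] [Fintype ι]

/-- The codeword of the systematic code `(I | B)` with information symbols `u`. -/
def encode (B : Matrix ι κ R) (u : ι → R) : ι ⊕ κ → R := Sum.elim u (u ᵥ* B)

theorem encode_zero (B : Matrix ι κ R) : encode B 0 = 0 := by
  rw [encode, zero_vecMul, Sum.elim_zero_zero]

theorem dotProduct_encode [Fintype κ] (B : Matrix ι κ R) (u : ι → R) (x : ι ⊕ κ → R) :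
    x ⬝ᵥ encode B u = (x ∘ Sum.inl + B *ᵥ (x ∘ Sum.inr)) ⬝ᵥ u := by
  rw [add_dotProduct, dotProduct_comm (B *ᵥ _), dotProduct_mulVec, dotProduct_comm (u ᵥ* B)]
  exact Fintype.sum_sum_type _

theorem forall_dotProduct_encode_eq_zero_iff [Fintype κ] (B : Matrix ι κ R) (x : ι ⊕ κ → R) :
    (∀ u, x ⬝ᵥ encode B u = 0) ↔ x ∘ Sum.inl + B *ᵥ (x ∘ Sum.inr) = 0 := by
  simp only [dotProduct_encode, dotProduct_eq_zero_iff]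

theorem mulVec_vecMul_of_mul_transpose_eq_neg_one [DecidableEq ι] {B : Matrix ι ι R}
    (hB : B * Bᵀ = -1) (u : ι → R) : B *ᵥ (u ᵥ* B) = -u := by
  rw [← mulVec_transpose, mulVec_mulVec, hB, neg_mulVec, one_mulVec]

theorem range_encode_eq_dual [DecidableEq ι] {B : Matrix ι ι R} (hB : B * Bᵀ = -1) :
    Set.range (encode B) = {x | ∀ y ∈ Set.range (encode B), x ⬝ᵥ y = 0} := by
  ext x
  rw [Set.mem_ofPred_eq, Set.forall_mem_range, forall_dotProduct_encode_eq_zero_iff]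
  constructor
  · rintro ⟨u, rfl⟩
    change u + B *ᵥ (u ᵥ* B) = 0
    rw [mulVec_vecMul_of_mul_transpose_eq_neg_one hB, add_neg_cancel]
  · intro hx
    have hB' : Bᵀ * B = -1 := by
      rw [← neg_inj, neg_neg, ← neg_mul, mul_eq_one_comm, mul_neg, hB, neg_neg]
    have hr : (x ∘ Sum.inl) ᵥ* B = x ∘ Sum.inr := by
      rw [eq_neg_of_add_eq_zero_left hx, neg_vecMul, ← mulVec_transpose, mulVec_mulVec, hB',
        neg_mulVec, one_mulVec, neg_neg]
    exact ⟨x ∘ Sum.inl, by rw [encode, hr, Sum.elim_comp_inl_inr]⟩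

theorem comp_vecMul_submatrix (M : Matrix ι ι R) (e : ι ≃ ι) (u : ι → R) :
    (u ∘ e) ᵥ* M.submatrix e e = (u ᵥ* M) ∘ e := by
  rw [submatrix_vecMul_equiv, Function.comp_assoc, e.self_comp_symm, Function.comp_id]

theorem encode_vecMul_comp_of_transpose_submatrix_eq [DecidableEq ι] {B : Matrix ι ι R}
    (hB : B * Bᵀ = -1) {e : ι ≃ ι} (he : Bᵀ.submatrix e e = B) (u : ι → R) :
    encode B ((u ᵥ* B) ∘ e) = Sum.elim ((u ᵥ* B) ∘ e) ((-u) ∘ e) := by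
  have h := comp_vecMul_submatrix Bᵀ e (u ᵥ* B)
  rw [he, vecMul_transpose, mulVec_vecMul_of_mul_transpose_eq_neg_one hB] at h
  rw [encode, h]

theorem encode_map (f : R →+* S) (B : Matrix ι κ R) (u : ι → R) :
    encode (B.map f) (f ∘ u) = f ∘ encode B u := by
  rw [encode, encode, Sum.comp_elim]
  congr 1
  ext j
  exact (RingHom.map_vecMul f B u j).symm

theorem image_range_encode {f : R →+* S} (hf : Function.Surjective f) (B : Matrix ι κ R) :
    (f ∘ ·) '' Set.range (encode B) = Set.range (encode (B.map f)) := by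
  rw [← Set.range_comp, ← (hf.comp_left (α := ι)).range_comp]
  congr 1
  ext1 u
  exact (encode_map f B u).symm

end SystematicCodes

section BorderedDoubleCirculant

variable {m : ℕ}

/-- The bordered circulant block `B` of the generator matrix `(I | B)`, as a matrix. -/
def bdcMatrix (α β γ : ZMod 4) (r : Fin m → ZMod 4) :
    Matrix (Fin (m + 1)) (Fin (m + 1)) (ZMod 4) := of (bdcB α β γ r)

theorem encode_bdcMatrix_eq_sum (α β γ : ZMod 4) (r : Fin m → ZMod 4) (u : Fin (m + 1) → ZMod 4) :
    encode (bdcMatrix α β γ r) u = ∑ i, u i • bdcRow α β γ r i := by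
  ext (j | j)
  · simp [encode, bdcRow]
  · simp [encode, bdcRow, bdcMatrix, vecMul, dotProduct]

theorem coe_bdcCode (α β γ : ZMod 4) (r : Fin m → ZMod 4) :
    (bdcCode α β γ r : Set _) = Set.range (encode (bdcMatrix α β γ r)) := by
  ext x
  rw [bdcCode, SetLike.mem_coe, Submodule.mem_span_range_iff_exists_fun]
  simp only [← encode_bdcMatrix_eq_sum, Set.mem_range]

/-- The extension of a permutation of the circulant indices that fixes the border index `0`. -/
def borderPerm (e : Equiv.Perm (Fin m)) : Equiv.Perm (Fin (m + 1)) :=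
  Equiv.Perm.decomposeFin.symm (0, e)

theorem borderPerm_zero (e : Equiv.Perm (Fin m)) : borderPerm e 0 = 0 :=
  Equiv.Perm.decomposeFin_symm_apply_zero 0 e

theorem borderPerm_succ (e : Equiv.Perm (Fin m)) (i : Fin m) :
    borderPerm e i.succ = (e i).succ := by
  simp [borderPerm]

theorem bdcMatrix_transpose_submatrix_borderPerm_neg [NeZero m] (α β : ZMod 4)
    (r : Fin m → ZMod 4) :
    (bdcMatrix α β β r)ᵀ.submatrix (borderPerm (Equiv.neg _)) (borderPerm (Equiv.neg _)) =
      bdcMatrix α β β r := by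
  ext i j
  refine i.cases ?_ fun i => ?_ <;> refine j.cases ?_ fun j => ?_ <;>
    simp [bdcMatrix, bdcB, borderPerm_zero, borderPerm_succ, circEntry, sub_eq_add_neg, add_comm]

end BorderedDoubleCirculant

section PackedDigits

variable {n : ℕ}

/-- The number with base-`256` digits `d`. A vector over `ZMod 4` is represented by any `pack d`
with `d` lifting its entries, so that sums of few vectors do not carry. -/
def pack (d : Fin n → ℕ) : ℕ := ∑ j, d j * 256 ^ (j : ℕ)

theorem pack_succ (d : Fin (n + 1) → ℕ) : pack d = 256 * pack (fun j => d j.succ) + d 0 := by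
  simp only [pack, Fin.sum_univ_succ, Fin.val_zero, Fin.val_succ, mul_sum, pow_succ]
  rw [add_comm, pow_zero, mul_one]
  congr 1
  exact sum_congr rfl fun _ _ => by ring

theorem pack_add (d e : Fin n → ℕ) : pack d + pack e = pack fun j => d j + e j := by
  simp only [pack, add_mul, sum_add_distrib]

theorem pack_land {d e : Fin n → ℕ} (hd : ∀ j, d j < 256) (he : ∀ j, e j < 256) :
    pack d &&& pack e = pack fun j => d j &&& e j := by
  induction n with
  | zero => simp [pack]
  | succ n ih =>
    rw [pack_succ d, pack_succ e, pack_succ, ← ih (fun j => hd j.succ) fun j => he j.succ,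
      ← Nat.div_add_mod (_ &&& _) (2 ^ 8), Nat.and_div_two_pow, Nat.and_mod_two_pow]
    have := hd 0
    have := he 0
    congr 2 <;> congr 1 <;> omega

theorem pack_modEq_sum (d : Fin n → ℕ) : pack d ≡ ∑ j, d j [MOD 255] := by
  rw [← ZMod.natCast_eq_natCast_iff]
  have h : (256 : ZMod 255) = 1 := by decide
  simp [pack, h]

theorem pack_mod {d : Fin n → ℕ} (hd : ∑ j, d j < 255) : pack d % 255 = ∑ j, d j :=
  Nat.mod_eq_of_modEq (pack_modEq_sum d) hd

/-- The number of odd digits of `v`; since `256 ≡ 1` modulo `255`, a remainder adds up digits. -/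
def packedHam (n v : ℕ) : ℕ := (v &&& pack fun _ : Fin n => 1) % 255

/-- The Lee weight of the digits of `v` modulo `4`, by `2 * leeVal d = (d &&& 2) + (d + 1 &&& 2)`.
It is spelled with `Nat.land` etc. because the kernel would otherwise spend most of the search
unfolding the instances behind the operators. -/
def packedLee (n v : ℕ) : ℕ :=
  Nat.div (Nat.mod (Nat.add (Nat.land v (pack fun _ : Fin n => 2))
    (Nat.land (Nat.add v (pack fun _ : Fin n => 1)) (pack fun _ : Fin n => 2))) 255) 2

theorem packedLee_eq (n v : ℕ) :
    packedLee n v = ((v &&& pack fun _ : Fin n => 2) +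
      ((v + pack fun _ : Fin n => 1) &&& pack fun _ : Fin n => 2)) % 255 / 2 :=
  rfl

theorem two_mul_leeVal_natCast (d : ℕ) :
    2 * leeVal (d : ZMod 4) = (d &&& 2) + (d + 1 &&& 2) := by
  have h : ∀ k : ℕ, k < 4 → 2 * leeVal (k : ZMod 4) = (k &&& 2) + (k + 1 &&& 2) := by decide
  have land_two (m : ℕ) : m &&& 2 = m % 4 &&& 2 := by
    have h2 := Nat.and_mod_two_pow (a := m) (b := 2) (n := 2)
    have := Nat.and_le_right (n := m) (m := 2)
    rw [← Nat.mod_eq_of_lt (this.trans_lt (by norm_num : 2 < 2 ^ 2)), h2]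
  rw [← ZMod.natCast_mod d 4, h _ (Nat.mod_lt _ (by norm_num)), land_two d, land_two (d + 1),
    land_two (d % 4 + 1), Nat.mod_add_mod]

theorem packedHam_pack {d : Fin n → ℕ} (hn : n < 255) (hd : ∀ j, d j < 256) :
    packedHam n (pack d) = hWt (res2 fun j => (d j : ZMod 4)) := by
  have hodd : ∀ j, ((d j : ZMod 4)).val % 2 = d j % 2 := fun j => by
    rw [ZMod.val_natCast, Nat.mod_mod_of_dvd _ (by norm_num)]
  rw [packedHam, pack_land hd fun _ => by norm_num]
  simp only [Nat.and_one_is_mod, hWt_res2_eq_sum, hodd]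
  refine pack_mod ((sum_le_card_nsmul _ _ 1 fun j _ => by omega).trans_lt ?_)
  simpa using hn

theorem packedLee_pack {d : Fin n → ℕ} (hn : 4 * n < 255) (hd : ∀ j, d j < 255) :
    packedLee n (pack d) = leeWt fun j => (d j : ZMod 4) := by
  have hlee : ∀ j, 2 * leeVal (d j : ZMod 4) ≤ 4 := fun j => by
    have : ∀ a : ZMod 4, 2 * leeVal a ≤ 4 := by decide
    exact this _
  have hsum : ∑ j, 2 * leeVal (d j : ZMod 4) < 255 :=
    (sum_le_card_nsmul _ _ 4 fun j _ => hlee j).trans_lt (by simpa [mul_comm] using hn)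
  rw [packedLee_eq, pack_add, pack_land (fun j => (hd j).trans (by norm_num)) fun _ => by norm_num,
    pack_land (fun j => Nat.succ_lt_succ (hd j)) fun _ => by norm_num, pack_add]
  simp only [← two_mul_leeVal_natCast]
  rw [pack_mod hsum, ← mul_sum, Nat.mul_div_cancel_left _ two_pos, leeWt]

end PackedDigits

section PackedRows

variable {ι : Type*} [Fintype ι] {n : ℕ}

/-- Row `i` of `B`, packed into a number. -/
def packedRow (B : Matrix ι (Fin n) (ZMod 4)) (i : ι) : ℕ := pack fun j => (B i j).val

theorem sum_mul_packedRow (B : Matrix ι (Fin n) (ZMod 4)) (c : ι → ℕ) :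
    ∑ i, c i * packedRow B i = pack fun j => ∑ i, c i * (B i j).val := by
  simp only [packedRow, pack, mul_sum, sum_mul, mul_assoc]
  exact sum_comm

theorem sum_mul_val_lt (B : Matrix ι (Fin n) (ZMod 4)) {c : ι → ℕ} (hc : ∀ i, c i < 4)
    (hι : Fintype.card ι * 9 < 255) (j : Fin n) : ∑ i, c i * (B i j).val < 255 := by
  refine (sum_le_card_nsmul _ _ 9 fun i _ => ?_).trans_lt (by simpa using hι)
  exact Nat.mul_le_mul (Nat.lt_succ_iff.1 (hc i)) (Nat.lt_succ_iff.1 (ZMod.val_lt (B i j)))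

theorem natCast_sum_mul_val (B : Matrix ι (Fin n) (ZMod 4)) (c : ι → ℕ) (j : Fin n) :
    ((∑ i, c i * (B i j).val : ℕ) : ZMod 4) = ((fun i => (c i : ZMod 4)) ᵥ* B) j := by
  simp [vecMul, dotProduct]

theorem packedLee_sum_mul_packedRow (B : Matrix ι (Fin n) (ZMod 4)) (hn : 4 * n < 255)
    (hι : Fintype.card ι * 9 < 255) (u : ι → ZMod 4) :
    packedLee n (∑ i, (u i).val * packedRow B i) = leeWt (u ᵥ* B) := by
  rw [sum_mul_packedRow, packedLee_pack hn (sum_mul_val_lt B (fun i => ZMod.val_lt (u i)) hι)]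
  simp only [natCast_sum_mul_val, ZMod.natCast_zmod_val]

theorem res2_vecMul {κ : Type*} (u : ι → ZMod 4) (B : Matrix ι κ (ZMod 4)) :
    res2 (u ᵥ* B) = res2 u ᵥ* B.map (ZMod.castHom (by norm_num : (2 : ℕ) ∣ 4) (ZMod 2)) :=
  funext fun j => RingHom.map_vecMul _ B u j

theorem packedHam_sum_mul_packedRow (B : Matrix ι (Fin n) (ZMod 4)) (hn : n < 255)
    (hι : Fintype.card ι * 9 < 255) (u : ι → ZMod 4) :
    packedHam n (∑ i, (u i).val % 2 * packedRow B i) = hWt (res2 (u ᵥ* B)) := by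
  have hparity : res2 (fun i => (((u i).val % 2 : ℕ) : ZMod 4)) = res2 u := by
    have h : ∀ a : ZMod 4, ZMod.castHom (by norm_num : (2 : ℕ) ∣ 4) (ZMod 2) ((a.val % 2 : ℕ)) =
        ZMod.castHom (by norm_num : (2 : ℕ) ∣ 4) (ZMod 2) a := by decide
    exact funext fun i => h (u i)
  have hlt := sum_mul_val_lt B (c := fun i => (u i).val % 2) (fun i => by omega) hι
  rw [sum_mul_packedRow, packedHam_pack hn fun j => (hlt j).trans (by norm_num)]
  simp only [natCast_sum_mul_val]
  rw [res2_vecMul, hparity, ← res2_vecMul]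

end PackedRows

section Search

/-- Exhaustive check over the coefficient vectors of Lee weight at most `N - w`, added row by row
to the word `v` of Lee weight `w` on its information symbols. The recursion branches on the
coefficients modulo `2`; once these are fixed, either `skip` holds for their least lift, or
`accept` must hold for all lifts. The lifts are run through by `accept` itself, which the recursion
extends by adding twice the row or not. -/
def rowSearch (N : ℕ) (skip : ℕ → ℕ → Bool) : List ℕ → (ℕ → ℕ → Bool) → ℕ → ℕ → Bool
  | [], accept, w, v => skip w v || accept w v
  | r :: rows, accept, w, v =>
    rowSearch N skip rows
        (fun w v => accept w v && (Nat.blt N (w + 2) || accept (w + 2) (v + 2 * r))) w v &&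
      (Nat.blt N (w + 1) || rowSearch N skip rows
        (fun w v => accept w v && accept w (v + 2 * r)) (w + 1) (v + r))

theorem leeWt_fin_succ {n : ℕ} (u : Fin (n + 1) → ZMod 4) :
    leeWt u = leeVal (u 0) + leeWt fun i : Fin n => u i.succ :=
  Fin.sum_univ_succ _

theorem hWt_res2_fin_succ {n : ℕ} (u : Fin (n + 1) → ZMod 4) :
    hWt (res2 u) = (u 0).val % 2 + hWt (res2 fun i : Fin n => u i.succ) := by
  simp only [hWt_res2_eq_sum, Fin.sum_univ_succ]

theorem rowSearch_sound {N : ℕ} {skip : ℕ → ℕ → Bool} {n : ℕ} {row : Fin n → ℕ}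
    {accept : ℕ → ℕ → Bool} {w v : ℕ}
    (h : rowSearch N skip (List.ofFn row) accept w v = true) (u : Fin n → ZMod 4)
    (hu : w + leeWt u ≤ N) :
    skip (w + hWt (res2 u)) (v + ∑ i, (u i).val % 2 * row i) = true ∨
      accept (w + leeWt u) (v + ∑ i, (u i).val * row i) = true := by
  induction n generalizing accept w v with
  | zero => simpa [rowSearch, leeWt, hWt] using h
  | succ n ih =>
    rw [List.ofFn_succ, rowSearch, Bool.and_eq_true, Bool.or_eq_true, Nat.blt_eq] at h
    obtain ⟨heven, hodd⟩ := h
    rw [leeWt_fin_succ, ← add_assoc] at hu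
    rw [leeWt_fin_succ, hWt_res2_fin_succ, Fin.sum_univ_succ, Fin.sum_univ_succ]
    simp only [← add_assoc]
    have hcoeff : ∀ a : ZMod 4, (leeVal a = 0 ∧ a.val = 0) ∨ (leeVal a = 2 ∧ a.val = 2) ∨
        (leeVal a = 1 ∧ a.val = 1) ∨ (leeVal a = 1 ∧ a.val = 3) := by decide
    obtain ⟨hlee, hval⟩ | ⟨hlee, hval⟩ | ⟨hlee, hval⟩ | ⟨hlee, hval⟩ := hcoeff (u 0) <;>
      rw [hlee] at hu ⊢ <;> rw [hval]
    · exact (ih heven (fun i => u i.succ) hu).imp (by simp) fun h => by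
        simpa using (Bool.and_eq_true_iff.1 h).1
    · refine (ih heven (fun i => u i.succ) (by omega)).imp (by simp) fun h => ?_
      rw [add_right_comm w, add_right_comm v]
      refine (Bool.or_eq_true_iff.1 (Bool.and_eq_true_iff.1 h).2).resolve_left ?_
      rw [Nat.blt_eq]
      omega
    · exact (ih (hodd.resolve_left (by omega)) (fun i => u i.succ) hu).imp (by simp) fun h => by
        simpa using (Bool.and_eq_true_iff.1 h).1
    · refine (ih (hodd.resolve_left (by omega)) (fun i => u i.succ) hu).imp (by simp) fun h => ?_
      convert (Bool.and_eq_true_iff.1 h).2 using 2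
      ring

end Search

/-- The first row of the circulant block of `D32`. -/
def r32 : Fin 15 → ZMod 4 := ![0, 0, 2, 2, 1, 0, 1, 0, 0, 2, 3, 3, 3, 1, 2]

/-- The right half of the generator matrix `(I | B)` of `D32`. -/
def B32 : Matrix (Fin 16) (Fin 16) (ZMod 4) := bdcMatrix 0 1 1 r32

/-- The bordered double circulant code of length 32 with `(α, β, γ) = (0, 1, 1)` and circulant first
row `r32`. -/
def D32 : Submodule (ZMod 4) ((Fin 16 ⊕ Fin 16) → ZMod 4) := bdcCode 0 1 1 r32

theorem coe_D32 : (D32 : Set (Fin 16 ⊕ Fin 16 → ZMod 4)) = Set.range (encode B32) :=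
  coe_bdcCode 0 1 1 r32

theorem encode_mem_D32 (u : Fin 16 → ZMod 4) : encode B32 u ∈ D32 :=
  coe_D32.symm.subset ⟨u, rfl⟩

theorem B32_mul_transpose : B32 * B32ᵀ = -1 := by
  decide +kernel

theorem selfDualZ4_D32 : SelfDualZ4 D32 := by
  rw [SelfDualZ4, coe_D32]
  exact range_encode_eq_dual B32_mul_transpose

theorem residue_D32_eq_dual2 :
    residue (D32 : Set (Fin 16 ⊕ Fin 16 → ZMod 4)) =
      dual2 (residue (D32 : Set (Fin 16 ⊕ Fin 16 → ZMod 4))) := by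
  let f := ZMod.castHom (by norm_num : (2 : ℕ) ∣ 4) (ZMod 2)
  have hB : B32.map f * (B32.map f)ᵀ = -1 := by
    rw [← transpose_map, ← Matrix.map_mul, B32_mul_transpose, ← RingHom.mapMatrix_apply, map_neg,
      map_one]
  have hres : residue (D32 : Set (Fin 16 ⊕ Fin 16 → ZMod 4)) = Set.range (encode (B32.map f)) := by
    rw [coe_D32]
    exact image_range_encode (ZMod.castHom_surjective _) B32
  rw [hres]
  exact range_encode_eq_dual hB

theorem typeII_D32 : TypeII (D32 : Set (Fin 16 ⊕ Fin 16 → ZMod 4)) := by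
  have hrows : ∀ i, 8 ∣ eucWt (bdcRow 0 1 1 r32 i) := by decide +kernel
  exact typeII_span selfDualZ4_D32.subset (Set.forall_mem_range.2 hrows)

set_option maxRecDepth 100000 in
theorem rowSearch_B32 :
    rowSearch 6 (fun w v => Nat.blt 8 (w + packedHam 16 v)) (List.ofFn (packedRow B32))
      (fun w v => Nat.beq w 0 || Nat.ble 14 (w + packedLee 16 v)) 0 0 = true := by
  decide +kernel

theorem fourteen_le_leeWt_encode_of_leeWt_le_six {u : Fin 16 → ZMod 4} (hu : leeWt u ≤ 6)
    (hu0 : u ≠ 0) : 14 ≤ leeWt (encode B32 u) := by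
  have hlee : leeWt (encode B32 u) = leeWt u + leeWt (u ᵥ* B32) := leeWt_sumElim _ _
  have hodd : hWt (res2 (encode B32 u)) = hWt (res2 u) + hWt (res2 (u ᵥ* B32)) :=
    hWt_res2_sumElim _ _
  have hsearch := rowSearch_sound rowSearch_B32 u (by rwa [zero_add])
  simp only [zero_add] at hsearch
  rw [packedHam_sum_mul_packedRow B32 (by norm_num) (by decide), packedLee_sum_mul_packedRow B32
    (by norm_num) (by decide), ← hlee, ← hodd, Nat.blt_eq, Bool.or_eq_true, Nat.beq_eq,
    leeWt_eq_zero_iff, Nat.ble_eq] at hsearch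
  obtain hskip | h0 | h14 := hsearch
  · exact typeII_D32.fourteen_le_leeWt (encode_mem_D32 u) hskip
  · exact absurd h0 hu0
  · exact h14

theorem fourteen_le_leeWt_of_mem_D32 {x : Fin 16 ⊕ Fin 16 → ZMod 4} (hx : x ∈ D32) (hx0 : x ≠ 0) :
    14 ≤ leeWt x := by
  obtain ⟨u, rfl⟩ := coe_D32.subset hx
  have hu0 : u ≠ 0 := by
    rintro rfl
    exact hx0 (encode_zero B32)
  obtain hu | hu := le_or_gt (leeWt u) 6
  · exact fourteen_le_leeWt_encode_of_leeWt_le_six hu hu0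
  by_contra! hlt
  let σ := borderPerm (Equiv.neg (Fin 15))
  have hswap : encode B32 ((u ᵥ* B32) ∘ σ) = Sum.elim ((u ᵥ* B32) ∘ σ) ((-u) ∘ σ) :=
    encode_vecMul_comp_of_transpose_submatrix_eq B32_mul_transpose
      (bdcMatrix_transpose_submatrix_borderPerm_neg 0 1 r32) u
  have hlee : leeWt (encode B32 u) = leeWt u + leeWt (u ᵥ* B32) := leeWt_sumElim _ _
  have h14 : 14 ≤ leeWt (encode B32 ((u ᵥ* B32) ∘ σ)) := by
    apply fourteen_le_leeWt_encode_of_leeWt_le_six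
    · rw [leeWt_comp_equiv]
      omega
    · intro h0
      have hB := mulVec_vecMul_of_mul_transpose_eq_neg_one B32_mul_transpose u
      rw [(σ.surjective.injective_comp_right h0 : u ᵥ* B32 = 0), mulVec_zero] at hB
      exact hu0 (neg_eq_zero.1 hB.symm)
  rw [hswap, leeWt_sumElim, leeWt_comp_equiv, leeWt_comp_equiv, leeWt_neg] at h14
  omega

theorem minLee_D32 : minLee (D32 : Set (Fin 16 ⊕ Fin 16 → ZMod 4)) = 14 := by
  refine IsLeast.csInf_eq ⟨⟨encode B32 ![1, 2, 3, 0, 0, 0, 0, 0, 0, 0, 0, 0, 0, 0, 0, 0],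
    encode_mem_D32 _, by decide +kernel, by decide +kernel⟩, ?_⟩
  rintro _ ⟨x, hx, hx0, rfl⟩
  exact fourteen_le_leeWt_of_mem_D32 hx hx0

theorem minHam_residue_D32 :
    minHam (residue (D32 : Set (Fin 16 ⊕ Fin 16 → ZMod 4))) = 8 := by
  refine IsLeast.csInf_eq ⟨⟨res2 (encode B32 (Pi.single 1 1)),
    Set.mem_image_of_mem _ (encode_mem_D32 _), by decide +kernel, by decide +kernel⟩, ?_⟩
  rintro _ ⟨y, hy, hy0, rfl⟩
  have h14 := le_two_mul_hWt_of_mem_residue (fun x => fourteen_le_leeWt_of_mem_D32) hy hy0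
  have h4 := typeII_D32.doublyEven_residue y hy
  omega

end Z4Note

open Z4Note in
/-- the bordered double circulant code `D_{32}` is a self-dual Type II
`ZMod 4`-code with minimum Lee weight 14 whose residue code is a binary extremal
doubly even self-dual code of length 32 (minimum Hamming weight 8). -/
theorem bdc_code_D32_properties :
    let D : Submodule (ZMod 4) ((Fin 16 ⊕ Fin 16) → ZMod 4) :=
      bdcCode 0 1 1 ![0,0,2,2,1,0,1,0,0,2,3,3,3,1,2]
    SelfDualZ4 D ∧ TypeII (D : Set ((Fin 16 ⊕ Fin 16) → ZMod 4)) ∧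
    minLee (D : Set ((Fin 16 ⊕ Fin 16) → ZMod 4)) = 14 ∧
    residue (D : Set ((Fin 16 ⊕ Fin 16) → ZMod 4)) =
      dual2 (residue (D : Set ((Fin 16 ⊕ Fin 16) → ZMod 4))) ∧
    DoublyEven (residue (D : Set ((Fin 16 ⊕ Fin 16) → ZMod 4))) ∧
    minHam (residue (D : Set ((Fin 16 ⊕ Fin 16) → ZMod 4))) = 8 :=
  ⟨selfDualZ4_D32, typeII_D32, minLee_D32, residue_D32_eq_dual2, typeII_D32.doublyEven_residue,
    minHam_residue_D32⟩
end
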